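/- Let ℋ be the family of trees of the form G_w(P₃, T₁, …, T_l) or G_w(P₂, P₂, T₁, …, T_l) with l ≥ 0, where each T_i is isomorphic to P₄ or to the star K_{1,3}. If T is a tree of order n with n ≡ 0 (mod 3), n ≥ 3, and T is not isomorphic to any member of ℋ, then m(T) ≤ 3^{n/3−1} + 1. -/

import Mathlib

open scoped Classical

variable {V : Type*}

/-- The number of neighbors of `v` that lie inside the finite set `s`,
i.e. the degree of `v` in the subgraph induced by `s` (when `v ∈ s`). -/
noncomputable def nbrCount (G : SimpleGraph V) (s : Finset V) (v : V) : ℕ :=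
  {w ∈ (s : Set V) | G.Adj v w}.ncard

/-- `s` is a dissociation set of `G`: the subgraph induced by `s` has maximum degree at most 1. -/
def IsDissoc (G : SimpleGraph V) (s : Finset V) : Prop :=
  ∀ v ∈ s, nbrCount G s v ≤ 1

/-- The dissociation number of the subgraph of `G` induced by `A`. -/
noncomputable def dissNumOn (G : SimpleGraph V) (A : Set V) : ℕ :=
  sSup {n | ∃ s : Finset V, ↑s ⊆ A ∧ IsDissoc G s ∧ s.card = n}

/-- `s` is a maximum dissociation set of the subgraph of `G` induced by `A`. -/
def IsMaxDissocOn (G : SimpleGraph V) (A : Set V) (s : Finset V) : Prop :=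
  ↑s ⊆ A ∧ IsDissoc G s ∧ s.card = dissNumOn G A

/-- The number of maximum dissociation sets of the subgraph of `G` induced by `A`. -/
noncomputable def numMaxDissocOn (G : SimpleGraph V) (A : Set V) : ℕ :=
  Nat.card {s : Finset V // IsMaxDissocOn G A s}

/-- The dissociation number of `G`. -/
noncomputable def dissNum (G : SimpleGraph V) : ℕ :=
  dissNumOn G Set.univ

/-- `s` is a maximum dissociation set of `G`. -/
def IsMaxDissoc (G : SimpleGraph V) (s : Finset V) : Prop :=
  IsMaxDissocOn G Set.univ s

/-- The number `m(G)` of maximum dissociation sets of `G`. -/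
noncomputable def numMaxDissoc (G : SimpleGraph V) : ℕ :=
  numMaxDissocOn G Set.univ

/-- `m(G[A], u⁻)`: maximum dissociation sets of `G[A]` not containing `u`. -/
noncomputable def numMaxDissocOnAway (G : SimpleGraph V) (A : Set V) (u : V) : ℕ :=
  Nat.card {s : Finset V // IsMaxDissocOn G A s ∧ u ∉ s}

/-- `m(G[A], u⁰)`: maximum dissociation sets of `G[A]` containing `u` with induced degree 0. -/
noncomputable def numMaxDissocOnDeg0 (G : SimpleGraph V) (A : Set V) (u : V) : ℕ :=
  Nat.card {s : Finset V // IsMaxDissocOn G A s ∧ u ∈ s ∧ nbrCount G s u = 0}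

/-- `m(G[A], u¹)`: maximum dissociation sets of `G[A]` containing `u` with induced degree 1. -/
noncomputable def numMaxDissocOnDeg1 (G : SimpleGraph V) (A : Set V) (u : V) : ℕ :=
  Nat.card {s : Finset V // IsMaxDissocOn G A s ∧ u ∈ s ∧ nbrCount G s u = 1}

/-- `m(G, u⁻)`. -/
noncomputable def numMaxDissocAway (G : SimpleGraph V) (u : V) : ℕ :=
  numMaxDissocOnAway G Set.univ u

/-- `m(G, u⁰)`. -/
noncomputable def numMaxDissocDeg0 (G : SimpleGraph V) (u : V) : ℕ :=
  numMaxDissocOnDeg0 G Set.univ u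

/-- `m(G, u¹)`. -/
noncomputable def numMaxDissocDeg1 (G : SimpleGraph V) (u : V) : ℕ :=
  numMaxDissocOnDeg1 G Set.univ u

/-- `m̄`: relative count, `numMaxDissocOn G B` if `dissNumOn G B = dissNumOn G A`, else 0. -/
noncomputable def mbar (G : SimpleGraph V) (A B : Set V) : ℕ :=
  if dissNumOn G B = dissNumOn G A then numMaxDissocOn G B else 0

/-- `G` is a potted graph whose (unique) cycle has length `k`: `G` is connected and unicyclic
(equivalently, connected with as many edges as vertices), and its cycle has length `k` and
contains a unique vertex of degree larger than 2. -/
def IsPotted (G : SimpleGraph V) (k : ℕ) : Prop :=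
  G.Connected ∧ G.edgeSet.ncard = Nat.card V ∧
    ∃ (v : V) (c : G.Walk v v), c.IsCycle ∧ c.length = k ∧
      ∃! u, u ∈ c.support ∧ 2 < (G.neighborSet u).ncard

/-- Base (one-directional) edge relation for the trees in the family `ℋ`.
The vertex `Sum.inl ()` is the identification vertex `w`.  If `pa = true` the
`Fin 2` part forms a pendant path `w - s₀ - s₁` (a `P₃` with a leaf identified
with `w`); if `pa = false` both vertices of the `Fin 2` part are pendant
neighbors of `w` (two copies of `P₂` with a leaf identified with `w`).
The `i`-th branch `Fin l × Fin 3` is a `P₄` with a leaf identified with `w`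
(a path `w - (i,0) - (i,1) - (i,2)`) when `bt i = true`, and a `K_{1,3}` with a
leaf identified with `w` (edges `w - (i,0)`, `(i,0) - (i,1)`, `(i,0) - (i,2)`)
when `bt i = false`. -/
def HBase (pa : Bool) (l : ℕ) (bt : Fin l → Bool) :
    Unit ⊕ (Fin 2 ⊕ Fin l × Fin 3) → Unit ⊕ (Fin 2 ⊕ Fin l × Fin 3) → Prop
  | Sum.inl _, Sum.inr (Sum.inl j) => pa = false ∨ j = 0
  | Sum.inr (Sum.inl j), Sum.inr (Sum.inl j') => pa = true ∧ j = 0 ∧ j' = 1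
  | Sum.inl _, Sum.inr (Sum.inr (_, j)) => j = 0
  | Sum.inr (Sum.inr (i, j)), Sum.inr (Sum.inr (i', j')) =>
      i = i' ∧ ((bt i = true ∧ ((j = 0 ∧ j' = 1) ∨ (j = 1 ∧ j' = 2))) ∨
                (bt i = false ∧ j = 0 ∧ (j' = 1 ∨ j' = 2)))
  | _, _ => False

/-- A member of the family `ℋ`: `G_w(P₃, T₁, …, T_l)` (when `pa = true`) or
`G_w(P₂, P₂, T₁, …, T_l)` (when `pa = false`), where `T_i` is `P₄` if
`bt i = true` and `K_{1,3}` if `bt i = false`. -/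
def HModel (pa : Bool) (l : ℕ) (bt : Fin l → Bool) :
    SimpleGraph (Unit ⊕ (Fin 2 ⊕ Fin l × Fin 3)) :=
  SimpleGraph.fromRel (HBase pa l bt)

/-! ## Rooted trees and their states -/

inductive RTree : Type
  | leaf : RTree
  | join : RTree → RTree → RTree

inductive Ty : Type
  | one : Ty
  | ta : Ty
  | tb : Ty
  deriving DecidableEq

abbrev St := Ty × ℕ × ℕ × ℕ

def stot : St → ℕ
  | (.one, x, y, z) => x + y + z
  | (.ta, _, y, z) => y + z
  | (.tb, _, _, z) => z

def jn : St → St → St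
  | (.one, x, y, z), (.one, p, q, r) => (.one, x * (p + q + r), y * p, z * p + y * q)
  | (.one, x, y, _), (.ta, _, q, r) => (.one, x * (q + r), 0, y * q)
  | (.one, x, _, _), (.tb, _, _, r) => (.one, x * r, 0, 0)
  | (.ta, x, y, z), (.one, p, q, r) => (.ta, x * (p + q + r), y * p, z * p + y * q)
  | (.ta, x, y, _), (.ta, p, q, r) => (.tb, x * (q + r), y * p, y * q)
  | (.ta, x, y, z), (.tb, p, q, r) => (.one, x * r, y * p, z * p + y * q)
  | (.tb, x, y, z), (.one, p, q, r) => (.tb, x * (p + q + r), y * p, z * p)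
  | (.tb, x, y, z), (.ta, p, q, r) => (.one, x * (q + r), 0, z * p + y * q)
  | (.tb, x, _, z), (.tb, p, _, r) => (.one, x * r, 0, z * p)

namespace RTree

def size : RTree → ℕ
  | leaf => 1
  | join t s => size t + size s

def st : RTree → St
  | leaf => (.ta, 1, 1, 0)
  | join t s => jn (st t) (st s)

def tot (t : RTree) : ℕ := stot t.st

theorem size_pos (t : RTree) : 1 ≤ t.size := by
  induction t with
  | leaf => simp [size]
  | join t s h1 h2 => simp [size]; omega

theorem size_one {t : RTree} (h : t.size = 1) : t = leaf := by
  cases t with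
  | leaf => rfl
  | join t s => have := size_pos t; have := size_pos s; simp [size] at h; omega

theorem size_two {t : RTree} (h : t.size = 2) : t = join leaf leaf := by
  cases t with
  | leaf => simp [size] at h
  | join t s =>
    have := size_pos t; have := size_pos s; simp only [size] at h
    rw [size_one (t := t) (by omega), size_one (t := s) (by omega)]

theorem size_three {t : RTree} (h : t.size = 3) :
    t = join leaf (join leaf leaf) ∨ t = join (join leaf leaf) leaf := by
  cases t with
  | leaf => simp [size] at h
  | join t s =>
    have := size_pos t; have := size_pos s; simp only [size] at h
    rcases (by omega : t.size = 1 ∧ s.size = 2 ∨ t.size = 2 ∧ s.size = 1) with h | h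
    · rw [size_one h.1, size_two h.2]; simp
    · rw [size_one h.2, size_two h.1]; simp

/-- Reordering the children of the root. -/
inductive Re : RTree → RTree → Prop
  | refl (t) : Re t t
  | trans {t s r} : Re t s → Re s r → Re t r
  | comm (t s r) : Re (join (join t s) r) (join (join t r) s)
  | congr {t t'} (s) : Re t t' → Re (join t s) (join t' s)

/-- Equality of the underlying unrooted trees. -/
inductive U : RTree → RTree → Prop
  | re {t s} : Re t s → U t s
  | swap (t s) : U (join t s) (join s t)
  | trans {t s r} : U t s → U s r → U t r

theorem Re.size_eq {t s : RTree} (h : Re t s) : t.size = s.size := by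
  induction h with
  | refl => rfl
  | trans _ _ h1 h2 => omega
  | comm => simp [size]; omega
  | congr s _ ih => simp [size, ih]

theorem U.size_eq {t s : RTree} (h : U t s) : t.size = s.size := by
  induction h with
  | re h => exact h.size_eq
  | swap t s => simp [size]; omega
  | trans _ _ h1 h2 => omega

theorem jn_comm (a b c : St) : jn (jn a b) c = jn (jn a c) b := by
  obtain ⟨τ, x, y, z⟩ := a
  obtain ⟨τ', p, q, r⟩ := b
  obtain ⟨τ'', u, v, w⟩ := c
  cases τ <;> cases τ' <;> cases τ'' <;>
    refine Prod.ext rfl (Prod.ext ?_ (Prod.ext ?_ ?_)) <;> simp only [jn] <;> ring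

theorem stot_swap (a b : St) : stot (jn a b) = stot (jn b a) := by
  obtain ⟨τ, x, y, z⟩ := a
  obtain ⟨τ', p, q, r⟩ := b
  cases τ <;> cases τ' <;> simp only [jn, stot] <;> ring

theorem Re.st_eq {t s : RTree} (h : Re t s) : t.st = s.st := by
  induction h with
  | refl => rfl
  | trans _ _ h1 h2 => rw [h1, h2]
  | comm => simp [st, jn_comm]
  | congr s _ ih => simp [st, ih]

theorem U.tot_eq {t s : RTree} (h : U t s) : t.tot = s.tot := by
  induction h with
  | re h => simp [tot, h.st_eq]
  | swap t s => simp only [tot, st]; exact stot_swap _ _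
  | trans _ _ h1 h2 => rw [h1, h2]

/-! ### Elementary facts on states -/

def Pos : St → Prop
  | (.one, x, y, z) => 0 < x ∧ (0 < y → 0 < z)
  | (.ta, x, y, _) => 0 < x ∧ 0 < y
  | (.tb, x, y, z) => 0 < x ∧ 0 < y ∧ 0 < z

theorem pos_jn {a b : St} (ha : Pos a) (hb : Pos b) : Pos (jn a b) := by
  obtain ⟨τ, x, y, z⟩ := a
  obtain ⟨τ', p, q, r⟩ := b
  cases τ <;> cases τ' <;> simp only [jn, Pos] at * <;> simp <;> grind

theorem pos_st (t : RTree) : Pos t.st := by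
  induction t with
  | leaf => simp [st, Pos]
  | join t s h1 h2 => exact pos_jn h1 h2

theorem tot_pos (t : RTree) : 0 < t.tot := by
  have := pos_st t
  unfold tot
  generalize t.st = a at *
  obtain ⟨τ, x, y, z⟩ := a
  cases τ <;> simp only [Pos, stot] at * <;> omega

def F (n : ℕ) : ℕ := 3 ^ (n / 3)

theorem F_mono {a b : ℕ} (h : a ≤ b) : F a ≤ F b :=
  Nat.pow_le_pow_right (by norm_num) (by omega)

theorem F_pos (a : ℕ) : 0 < F a := by unfold F; positivity

theorem F_mul (a b : ℕ) : F a * F b ≤ F (a + b) := by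
  unfold F; rw [← pow_add]; exact Nat.pow_le_pow_right (by norm_num) (by omega)

theorem F_carry (a b : ℕ) (h : 3 ≤ a % 3 + b % 3) : 3 * (F a * F b) ≤ F (a + b) := by
  unfold F; rw [← pow_add, ← pow_succ']; exact Nat.pow_le_pow_right (by norm_num) (by omega)

theorem F_eq (k r : ℕ) (h : r < 3) : F (3 * k + r) = 3 ^ k := by
  unfold F; congr 1; omega

/-- Rooted trees all of whose branches have at most three vertices, in a carry-free way. -/
inductive Full : RTree → Prop
  | leaf : Full leaf
  | p3a {t} : Full t → Full (join t (join leaf (join leaf leaf)))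
  | p3b {t} : Full t → Full (join t (join (join leaf leaf) leaf))
  | addLeaf {t} : Full t → t.size % 3 ≠ 0 → Full (join t leaf)
  | addP2 {t} : Full t → t.size % 3 = 1 → Full (join t (join leaf leaf))

theorem Full.state {t : RTree} (h : Full t) : ∃ k,
    (t.size = 3 * k + 1 ∧ ∃ c ≤ k, t.st = (.ta, 3 ^ k, 1, c)) ∨
    (t.size = 3 * k + 2 ∧ t.st = (.tb, 3 ^ k, 1, 1)) ∨
    (t.size = 3 * k + 3 ∧ ∃ c ≤ k + 1, t.st = (.one, 3 ^ k, 1, c)) ∨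
    (t.size = 3 * k + 3 ∧ t.st = (.one, 3 ^ k, 0, 2)) := by
  induction h with
  | leaf => exact ⟨0, by simp [size, st]⟩
  | p3a h ih =>
    obtain ⟨k, ⟨h1, c, h2, h3⟩ | ⟨h1, h2⟩ | ⟨h1, c, h2, h3⟩ | ⟨h1, h2⟩⟩ := ih <;> refine ⟨k + 1, ?_⟩
    · left; refine ⟨by simp [size]; omega, c + 1, by omega, ?_⟩
      simp [st, h3, jn, pow_succ]
    · right; left; refine ⟨by simp [size]; omega, ?_⟩
      simp [st, h2, jn, pow_succ]
    · right; right; left; refine ⟨by simp [size]; omega, c + 1, by omega, ?_⟩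
      simp [st, h3, jn, pow_succ]
    · right; right; right; refine ⟨by simp [size]; omega, ?_⟩
      simp [st, h2, jn, pow_succ]
  | p3b h ih =>
    obtain ⟨k, ⟨h1, c, h2, h3⟩ | ⟨h1, h2⟩ | ⟨h1, c, h2, h3⟩ | ⟨h1, h2⟩⟩ := ih <;> refine ⟨k + 1, ?_⟩
    · left; refine ⟨by simp [size]; omega, c, by omega, ?_⟩
      simp [st, h3, jn, pow_succ]
    · right; left; refine ⟨by simp [size]; omega, ?_⟩
      simp [st, h2, jn, pow_succ]
    · right; right; left; refine ⟨by simp [size]; omega, c, by omega, ?_⟩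
      simp [st, h3, jn, pow_succ]
    · right; right; right; refine ⟨by simp [size]; omega, ?_⟩
      simp [st, h2, jn, pow_succ]
  | addLeaf h hm ih =>
    obtain ⟨k, ⟨h1, c, h2, h3⟩ | ⟨h1, h2⟩ | ⟨h1, c, h2, h3⟩ | ⟨h1, h2⟩⟩ := ih
    · exact ⟨k, by right; left; simp [size, st, h3, jn, h1]⟩
    · exact ⟨k, by right; right; right; simp [size, st, h2, jn, h1]⟩
    · omega
    · omega
  | addP2 h hm ih =>
    obtain ⟨k, ⟨h1, c, h2, h3⟩ | ⟨h1, h2⟩ | ⟨h1, c, h2, h3⟩ | ⟨h1, h2⟩⟩ := ih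
    · refine ⟨k, ?_⟩
      right; right; left
      refine ⟨by simp [size]; omega, c + 1, by omega, ?_⟩
      simp [st, h3, jn]
    · omega
    · omega
    · omega

theorem Full.tot_le {t : RTree} (h : Full t) {k : ℕ} (hk : t.size = 3 * k + 3) :
    t.tot ≤ 3 ^ k + k + 2 := by
  obtain ⟨k', ⟨h1, c, h2, h3⟩ | ⟨h1, h2⟩ | ⟨h1, c, h2, h3⟩ | ⟨h1, h2⟩⟩ := h.state
  · omega
  · omega
  · obtain rfl : k' = k := by omega
    simp only [tot, h3, stot]; omega
  · obtain rfl : k' = k := by omega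
    simp only [tot, h2, stot]; omega

/-- The main bound. -/
def Bd (t : RTree) : Prop := ∀ k,
  (t.size = 3 * k + 3 → t.tot ≤ 3 ^ k + 1 ∨ ∃ t', U t t' ∧ Full t') ∧
  (t.size = 3 * k + 4 → t.tot ≤ 3 ^ k + 1) ∧
  (t.size = 3 * k + 5 → t.tot ≤ 3 ^ k)

theorem pow3_ge (k : ℕ) : k + 1 ≤ 3 ^ k := by
  induction k with
  | zero => simp
  | succ k ih => rw [pow_succ]; omega

theorem Bd.b0 {t : RTree} (h : Bd t) {k : ℕ} (hk : t.size = 3 * k + 3) :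
    t.tot ≤ 3 ^ k + k + 2 := by
  rcases (h k).1 hk with h | ⟨t', h1, h2⟩
  · omega
  · rw [h1.tot_eq]; exact h2.tot_le (by rw [← h1.size_eq, hk])

theorem Bd.le_gap {t : RTree} (h : Bd t) (hs : 4 ≤ t.size) : 3 * t.tot ≤ 2 * F t.size := by
  obtain ⟨k, hk⟩ : ∃ k, t.size = 3 * k + 6 ∨ t.size = 3 * k + 4 ∨ t.size = 3 * k + 5 :=
    ⟨(t.size - 4) / 3, by omega⟩
  rcases hk with hk | hk | hk
  · have := h.b0 (k := k + 1) (by omega)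
    have h2 : F t.size = 3 ^ (k + 2) := by rw [hk]; exact F_eq (k + 2) 0 (by norm_num)
    have := pow3_ge k
    rw [h2]; rw [pow_succ] at *; rw [pow_succ] at *; omega
  · have := (h k).2.1 hk
    have h2 : F t.size = 3 ^ (k + 1) := by rw [hk]; exact F_eq (k + 1) 1 (by norm_num)
    have := pow3_ge k
    rw [h2]; rw [pow_succ] at *; omega
  · have := (h k).2.2 hk
    have h2 : F t.size = 3 ^ (k + 1) := by rw [hk]; exact F_eq (k + 1) 2 (by norm_num)
    rw [h2]; rw [pow_succ] at *; omega

theorem Bd.le_F {t : RTree} (h : Bd t) : t.tot ≤ F t.size := by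
  by_cases hs : 4 ≤ t.size
  · have := h.le_gap hs; omega
  · have := size_pos t
    rcases (by omega : t.size = 1 ∨ t.size = 2 ∨ t.size = 3) with h | h | h
    · rw [size_one h]; decide
    · rw [size_two h]; decide
    · rcases size_three h with h | h <;> rw [h] <;> decide

def X (t : RTree) : ℕ := t.st.2.1

theorem X_join (t s : RTree) : (join t s).X = t.X * s.tot := by
  simp only [X, st, tot]
  generalize t.st = a
  generalize s.st = b
  obtain ⟨τ, x, y, z⟩ := a
  obtain ⟨τ', p, q, r⟩ := b
  cases τ <;> cases τ' <;> simp [jn, stot]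

theorem X_le {n : ℕ} (H : ∀ t : RTree, t.size < n → Bd t) (t : RTree) (ht : t.size ≤ n) :
    t.X ≤ F (t.size - 1) := by
  induction t with
  | leaf => decide
  | join t s h1 _ =>
    have := size_pos t; have := size_pos s
    simp only [size] at ht ⊢
    rw [X_join]
    calc t.X * s.tot ≤ F (t.size - 1) * F s.size :=
          Nat.mul_le_mul (h1 (by omega)) (H s (by omega)).le_F
      _ ≤ F (t.size - 1 + s.size) := F_mul _ _
      _ ≤ _ := F_mono (by omega)

theorem X_gap {n : ℕ} (H : ∀ t : RTree, t.size < n → Bd t) (t : RTree) (ht : t.size ≤ n) :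
    3 * t.X ≤ 2 * F (t.size - 1) ∨ Full t := by
  induction t with
  | leaf => right; exact Full.leaf
  | join t s h1 _ =>
    have ht0 := size_pos t; have hs0 := size_pos s
    simp only [size] at ht ⊢
    rw [X_join]
    have hx := X_le H t (by omega)
    have hF := (H s (by omega)).le_F
    have hFF := F_mul (t.size - 1) s.size
    rw [show t.size + s.size - 1 = t.size - 1 + s.size by omega]
    by_cases hc : 3 ≤ (t.size - 1) % 3 + s.size % 3
    · left
      have := F_carry _ _ hc
      have := Nat.mul_le_mul hx hF
      omega
    by_cases h4 : 4 ≤ s.size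
    · left
      have := (H s (by omega)).le_gap h4
      have := Nat.mul_le_mul hx this
      nlinarith
    rcases h1 (by omega) with h1 | h1
    · left
      have := Nat.mul_le_mul h1 hF
      nlinarith
    right
    rcases (by omega : s.size = 1 ∨ s.size = 2 ∨ s.size = 3) with h | h | h
    · rw [size_one h]; exact .addLeaf h1 (by omega)
    · rw [size_two h]; exact .addP2 h1 (by omega)
    · rcases size_three h with h | h <;> rw [h]
      · exact .p3a h1
      · exact .p3b h1

theorem stot_jn_le (a b : St) (h : (jn a b).1 ≠ .one) : a.1 ≠ .one ∧
    stot (jn a b) ≤ stot a * stot b := by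
  obtain ⟨τ, x, y, z⟩ := a
  obtain ⟨τ', p, q, r⟩ := b
  cases τ <;> cases τ' <;> simp [jn, stot] at * <;> nlinarith [Nat.zero_le (z * q), Nat.zero_le (y*r), Nat.zero_le (z*r), Nat.zero_le (z * q), Nat.zero_le (y*q), Nat.zero_le (y*p)]

theorem tot_le_AB {n : ℕ} (H : ∀ t : RTree, t.size < n → Bd t) (t : RTree) (ht : t.size ≤ n)
    (hty : t.st.1 ≠ .one) : t.tot ≤ F (t.size - 1) := by
  induction t with
  | leaf => decide
  | join t s h1 _ =>
    have ht0 := size_pos t; have hs0 := size_pos s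
    simp only [size] at ht ⊢
    obtain ⟨h2, h3⟩ := stot_jn_le _ _ hty
    calc _ ≤ _ := h3
      _ ≤ F (t.size - 1) * F s.size :=
          Nat.mul_le_mul (h1 (by omega) h2) (H s (by omega)).le_F
      _ ≤ F (t.size - 1 + s.size) := F_mul _ _
      _ ≤ _ := F_mono (by omega)

theorem jn_ty (a b : St) (h : (jn a b).1 ≠ .ta) : b.1 ≠ .one ∨ a.1 ≠ .ta := by
  obtain ⟨τ, x, y, z⟩ := a
  obtain ⟨τ', p, q, r⟩ := b
  cases τ <;> cases τ' <;> simp [jn] at *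

theorem X_le_one {n : ℕ} (H : ∀ t : RTree, t.size < n → Bd t) (t : RTree) (ht : t.size ≤ n)
    (hty : t.st.1 ≠ .ta) (hm : t.size % 3 = 1) : 3 * t.X ≤ F (t.size - 1) := by
  induction t with
  | leaf => simp [st] at hty
  | join t s h1 _ =>
    have ht0 := size_pos t; have hs0 := size_pos s
    simp only [size] at ht ⊢ hm
    have hx := X_le H t (by omega)
    have hF := (H s (by omega)).le_F
    have hFF := F_mul (t.size - 1) s.size
    rw [X_join]
    rw [show t.size + s.size - 1 = t.size - 1 + s.size by omega]
    by_cases hc : 3 ≤ (t.size - 1) % 3 + s.size % 3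
    · have := F_carry _ _ hc
      have := Nat.mul_le_mul hx hF
      omega
    rcases jn_ty _ _ hty with h | h
    · have h2 := tot_le_AB H s (by omega) h
      have h3 : 3 * F (s.size - 1) = F s.size := by
        unfold F; rw [← pow_succ']; congr 1; omega
      have := Nat.mul_le_mul hx (le_trans (Nat.mul_le_mul_left 3 h2) h3.le)
      nlinarith
    · have := Nat.mul_le_mul (h1 (by omega) h (by omega)) hF
      nlinarith
end RTree

/-! ### States of all rooted trees with at most nine vertices -/

namespace RTree

def Ls : ℕ → List St
  | 1 => [(.ta,1,1,0)]
  | 2 => [(.tb,1,1,1)]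
  | 3 => [(.one,1,0,2), (.one,1,1,1)]
  | 4 => [(.one,1,0,0), (.one,1,0,1), (.ta,3,1,0), (.ta,3,1,1)]
  | 5 => [(.one,1,0,0), (.tb,3,1,1), (.ta,1,1,0), (.ta,2,1,0), (.tb,1,3,1), (.tb,2,3,1)]
  | 6 => [(.one,1,0,0), (.one,3,0,2), (.tb,1,1,1), (.tb,2,1,1), (.one,1,0,4), (.one,2,0,4), 
      (.one,3,1,1), (.one,3,1,2), (.ta,1,1,0), (.one,1,3,1), (.tb,1,2,1), (.one,1,1,3), 
      (.one,1,2,3)]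
  | 7 => [(.one,1,0,0), (.one,3,0,0), (.one,1,0,2), (.one,2,0,2), (.one,2,0,0), (.one,3,0,1), 
      (.tb,1,1,1), (.one,1,0,3), (.one,1,0,1), (.one,1,1,1), (.one,2,1,1), (.one,2,0,1), 
      (.ta,9,1,0), (.ta,9,1,1), (.ta,9,1,2), (.ta,1,1,0), (.ta,5,3,0), (.one,1,2,1), (.ta,5,1,0), 
      (.ta,6,2,0), (.ta,5,3,1), (.ta,6,3,1), (.ta,5,1,3), (.one,1,1,2), (.ta,5,1,1), (.ta,6,1,2)]
  | 8 => [(.one,1,0,0), (.one,3,0,0), (.one,2,0,0), (.one,1,0,2), (.one,1,0,1), (.one,2,0,1), 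
      (.tb,9,1,1), (.tb,1,1,1), (.tb,5,3,3), (.tb,5,1,1), (.tb,6,2,2), (.tb,6,3,3), (.tb,6,1,1), 
      (.one,1,1,1), (.ta,3,1,0), (.ta,3,1,1), (.ta,6,1,0), (.ta,6,1,1), (.tb,3,3,1), (.tb,6,3,1), 
      (.ta,1,1,0), (.ta,3,3,0), (.ta,4,2,0), (.ta,2,2,0), (.ta,4,3,0), (.ta,4,1,0), (.ta,2,1,0), 
      (.ta,4,2,1), (.ta,3,2,0), (.tb,1,9,1), (.tb,2,9,1), (.tb,3,9,1), (.tb,3,5,3), (.ta,4,1,2), 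
      (.tb,1,5,1), (.tb,2,6,2), (.tb,4,5,3), (.tb,4,6,3), (.tb,4,5,1), (.ta,4,1,1), (.tb,2,5,1), 
      (.tb,3,6,1)]
  | 9 => [(.one,1,0,0), (.one,3,0,0), (.one,2,0,0), (.one,9,0,2), (.one,1,0,2), (.one,5,0,6), 
      (.one,5,0,2), (.one,6,0,4), (.one,6,0,6), (.one,6,0,2), (.one,1,0,1), (.tb,3,1,1), 
      (.tb,6,1,1), (.one,3,0,4), (.tb,1,1,1), (.tb,3,3,3), (.tb,4,2,2), (.tb,2,2,2), (.tb,4,3,3), 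
      (.tb,4,1,1), (.tb,2,1,1), (.tb,3,2,2), (.one,1,0,10), (.one,2,0,10), (.one,3,0,10), 
      (.one,3,0,8), (.one,1,0,6), (.one,2,0,8), (.one,4,0,8), (.one,4,0,9), (.one,4,0,6), 
      (.one,2,0,6), (.one,3,0,7), (.one,9,1,1), (.one,9,1,2), (.one,9,1,3), (.one,1,1,1), 
      (.one,5,3,3), (.one,5,1,1), (.one,6,2,2), (.one,5,3,4), (.one,6,3,4), (.one,5,1,4), 
      (.one,5,1,2), (.one,6,1,3), (.ta,3,1,0), (.ta,3,1,1), (.one,3,3,1), (.one,3,3,4), 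
      (.tb,3,2,1), (.one,3,1,3), (.one,3,1,4), (.one,3,2,3), (.one,3,2,5), (.ta,1,1,0), 
      (.ta,2,1,0), (.tb,1,3,1), (.tb,2,3,1), (.ta,4,1,0), (.tb,4,3,1), (.ta,3,3,0), (.ta,2,2,0), 
      (.ta,3,2,0), (.one,1,9,1), (.one,3,5,3), (.one,1,5,1), (.one,2,6,2), (.one,3,6,3), 
      (.one,1,6,1), (.tb,1,6,1), (.tb,2,6,1), (.one,1,3,3), (.one,1,6,3), (.tb,2,4,2), (.tb,3,4,3), 
      (.tb,1,4,1), (.tb,1,2,1), (.tb,3,4,2), (.tb,2,3,2), (.one,1,1,9), (.one,1,2,9), (.one,1,3,9), 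
      (.one,3,3,5), (.tb,3,4,1), (.one,1,1,5), (.one,2,2,6), (.one,3,4,5), (.one,3,4,6), 
      (.one,1,4,5), (.tb,2,4,1), (.one,1,2,5), (.one,1,3,6)]
  | _ => []

def tyb : Ty → Ty → Bool
  | .one, .one => true
  | .ta, .ta => true
  | .tb, .tb => true
  | _, _ => false

def stb (a b : St) : Bool :=
  (tyb a.1 b.1).and ((Nat.beq a.2.1 b.2.1).and ((Nat.beq a.2.2.1 b.2.2.1).and (Nat.beq a.2.2.2 b.2.2.2)))

theorem stb_eq {a b : St} (h : stb a b = true) : a = b := by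
  obtain ⟨τ, x, y, z⟩ := a
  obtain ⟨τ', p, q, r⟩ := b
  simp only [stb, Bool.and_eq_true] at h
  obtain ⟨h0, h1, h2, h3⟩ := h
  have h1 := Nat.eq_of_beq_eq_true h1
  have h2 := Nat.eq_of_beq_eq_true h2
  have h3 := Nat.eq_of_beq_eq_true h3
  cases τ <;> cases τ' <;> simp_all [tyb]

/-- Boolean version of the closure check. -/
def closedB : Bool :=
  (List.range 10).all fun n => (List.range n).all fun k =>
    (Ls (n - k)).all fun a => (Ls k).all fun b => (Ls n).any (stb (jn a b))

set_option maxRecDepth 100000 in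
theorem closedB_true : closedB = true := by
  decide +kernel

theorem Ls_closed : ∀ n ∈ List.range 10, ∀ k ∈ List.range n,
    ∀ a ∈ Ls (n - k), ∀ b ∈ Ls k, jn a b ∈ Ls n := by
  intro n hn k hk a ha b hb
  have h := closedB_true
  unfold closedB at h
  have h := List.all_eq_true.1 (List.all_eq_true.1 (List.all_eq_true.1 (List.all_eq_true.1 h n hn) k hk) a ha) b hb
  obtain ⟨c, hc, he⟩ := List.any_eq_true.1 h
  rw [stb_eq he]; exact hc

theorem st_mem (t : RTree) (h : t.size ≤ 9) : t.st ∈ Ls t.size := by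
  induction t with
  | leaf => decide
  | join t s h1 h2 =>
    have := size_pos t; have := size_pos s
    simp only [size] at h
    have h3 := Ls_closed (t.size + s.size) (by simp; omega) s.size (by simp; omega) t.st
      (by rw [show t.size + s.size - s.size = t.size by omega]; exact h1 (by omega)) s.st (h2 (by omega))
    exact h3

def chk (b c : ℕ) : St → Bool
  | (.one, x, y, z) => decide (x + y + z + 2 * x + y ≤ b ∨ x = c)
  | _ => true

theorem chk6 : ∀ a ∈ Ls 6, chk 10 3 a = true := by decide +kernel
theorem chk9 : ∀ a ∈ Ls 9, chk 28 9 a = true := by decide +kernel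

/-! ### Decomposition -/

/-- All branches at the root have at most two vertices. -/
inductive Sm : RTree → Prop
  | leaf : Sm leaf
  | addLeaf {t} : Sm t → Sm (join t leaf)
  | addP2 {t} : Sm t → Sm (join t (join leaf leaf))

theorem sm_state {t : RTree} (h : Sm t) : t = leaf ∨ t = join leaf leaf ∨
    t = join leaf (join leaf leaf) ∨ t = join (join leaf leaf) leaf ∨
    (t.size = 4 ∧ t.st = (.one, 1, 0, 1)) ∨ (4 ≤ t.size ∧ t.st = (.one, 1, 0, 0)) := by
  induction h with
  | leaf => simp
  | addLeaf h ih =>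
    rcases ih with rfl | rfl | rfl | rfl | ⟨h1, h2⟩ | ⟨h1, h2⟩
    · simp
    · simp
    · simp [size, st, jn]
    · simp [size, st, jn]
    · simp [size, st, jn, h1, h2]
    · simp [size, st, jn, h2]; omega
  | addP2 h ih =>
    rcases ih with rfl | rfl | rfl | rfl | ⟨h1, h2⟩ | ⟨h1, h2⟩
    · simp
    · simp [size, st, jn]
    · simp [size, st, jn]
    · simp [size, st, jn]
    · simp [size, st, jn, h1, h2]
    · simp [size, st, jn, h2]; omega

theorem sm_or (t : RTree) : Sm t ∨ ∃ c d, Re t (join c d) ∧ 3 ≤ d.size := by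
  induction t with
  | leaf => left; exact .leaf
  | join t s h1 _ =>
    by_cases h3 : 3 ≤ s.size
    · right; exact ⟨t, s, .refl _, h3⟩
    rcases h1 with h1 | ⟨c, d, h1, h2⟩
    · left
      have := size_pos s
      rcases (by omega : s.size = 1 ∨ s.size = 2) with h | h
      · rw [size_one h]; exact .addLeaf h1
      · rw [size_two h]; exact .addP2 h1
    · right
      exact ⟨join c s, d, .trans (.congr s h1) (.comm c d s), h2⟩

theorem decomp_join (n : ℕ) : ∀ c s : RTree, c.size = n → 3 ≤ c.size →
    ∃ c' s', U (join c s) (join c' s') ∧ Sm c' ∧ 3 ≤ c'.size := by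
  induction n using Nat.strong_induction_on with
  | _ n ih =>
    intro c s hc h3
    rcases sm_or c with h | ⟨e, d, h, hd⟩
    · exact ⟨c, s, .re (.refl _), h, h3⟩
    · have h4 := h.size_eq
      have := size_pos e
      simp only [size] at h4
      obtain ⟨c', s', h5, h6⟩ := ih d.size (by omega) d (join e s) rfl hd
      exact ⟨c', s', .trans (.re (.trans (.congr s h) (.comm e d s))) (.trans (.swap _ _) h5), h6⟩

theorem decomp (t : RTree) (h3 : 3 ≤ t.size) :
    Sm t ∨ ∃ c s, U t (join c s) ∧ Sm c ∧ 3 ≤ c.size := by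
  rcases sm_or t with h | ⟨e, d, h, hd⟩
  · left; exact h
  · right
    obtain ⟨c', s', h5, h6⟩ := decomp_join d.size d e rfl hd
    exact ⟨c', s', .trans (.re h) (.trans (.swap _ _) h5), h6⟩

theorem Bd.of_U {t t' : RTree} (h : U t t') (hb : Bd t') : Bd t := by
  intro k
  rw [h.size_eq, h.tot_eq]
  refine ⟨fun hk => ?_, (hb k).2⟩
  rcases (hb k).1 hk with h1 | ⟨t'', h1, h2⟩
  · left; exact h1
  · right; exact ⟨t'', h.trans h1, h2⟩

def Y (t : RTree) : ℕ := t.st.2.2.1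

theorem one_facts {s : RTree} (h : s.st.1 = .one) :
    s.X + s.Y ≤ s.tot ∧ (0 < s.Y → s.X + s.Y + 1 ≤ s.tot) := by
  have := pos_st s
  simp only [X, Y, tot]
  generalize s.st = a at *
  obtain ⟨τ, x, y, z⟩ := a
  subst h
  simp only [Pos, stot] at *
  omega

/-- Totals after attaching a small piece. -/
theorem tot_join {c s : RTree} {e d : ℕ} (hc : c.st = (.one, 1, e, d)) :
    (s.st.1 = .one → (join c s).tot = s.tot + (e + d) * s.X + e * s.Y) ∧
    (s.st.1 ≠ .one → (join c s).tot = s.tot + e * (if s.st.1 = .ta then s.Y else 0)) ∧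
    (s.st.1 = .ta → s.Y ≤ s.tot) := by
  simp only [X, Y, tot, st, hc]
  generalize s.st = a at *
  obtain ⟨τ, x, y, z⟩ := a
  cases τ <;> simp [jn, stot] <;> ring

theorem pow3_a (j : ℕ) : 3 * j + 6 ≤ 2 * 3 ^ (j + 1) := by
  induction j with
  | zero => norm_num
  | succ k ih => rw [pow_succ]; omega

theorem pow3_b (j : ℕ) : 2 * (j + 3) + 2 ≤ 3 ^ (j + 2) := by
  induction j with
  | zero => norm_num
  | succ k ih => rw [pow_succ]; omega

section
variable {n : ℕ} (H : ∀ t : RTree, t.size < n → Bd t) (c s : RTree)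

theorem join00 (H : ∀ t : RTree, t.size < n → Bd t) (hn : c.size + s.size = n)
    (h4 : 4 ≤ c.size) (hc : c.st = (.one, 1, 0, 0)) : Bd (join c s) := by
  have h0 := size_pos s
  have h1 : (join c s).tot = s.tot := by
    obtain ⟨h1, h2, -⟩ := tot_join (s := s) hc
    by_cases h : s.st.1 = .one
    · rw [h1 h]; simp
    · rw [h2 h]; simp
  have h2 := (H s (by omega)).le_F
  intro k
  rw [h1]
  simp only [size]
  refine ⟨fun h => .inl ?_, fun h => ?_, fun h => ?_⟩
  · have : F s.size ≤ F (3 * k + 0) := F_mono (by omega)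
    rw [F_eq _ _ (by norm_num)] at this; omega
  · have : F s.size ≤ F (3 * k + 0) := F_mono (by omega)
    rw [F_eq _ _ (by norm_num)] at this; omega
  · have : F s.size ≤ F (3 * k + 1) := F_mono (by omega)
    rw [F_eq _ _ (by norm_num)] at this; omega

theorem X1 (H : ∀ t : RTree, t.size < n → Bd t) (hn : s.size ≤ n) (h : s.st.1 = .one) {j : ℕ}
    (hj : s.size = 3 * j + 4) : s.X ≤ 3 ^ j := by
  have := X_le_one H s hn (by simp [h]) (by omega)
  rw [show s.size - 1 = 3 * (j + 1) + 0 by omega, F_eq _ _ (by norm_num), pow_succ] at this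
  omega

theorem X0 (H : ∀ t : RTree, t.size < n → Bd t) (hn : s.size ≤ n) {j : ℕ}
    (hj : s.size = 3 * j + 3) : s.X ≤ 3 ^ j := by
  have := X_le H s hn
  rwa [show s.size - 1 = 3 * j + 2 by omega, F_eq _ _ (by norm_num)] at this

theorem not_one {s : RTree} (h : s.st.1 = .one) : 3 ≤ s.size := by
  by_contra hh
  have := size_pos s
  rcases (by omega : s.size = 1 ∨ s.size = 2) with h' | h'
  · rw [size_one h'] at h; simp [st] at h
  · rw [size_two h'] at h; simp [st, jn] at h

theorem join01 (H : ∀ t : RTree, t.size < n → Bd t) (hn : c.size + s.size = n)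
    (h4 : c.size = 4) (hc : c.st = (.one, 1, 0, 1)) : Bd (join c s) := by
  have h0 := size_pos s
  obtain ⟨h1, h2, -⟩ := tot_join (s := s) hc
  have hB := H s (by omega)
  have hF := hB.le_F
  intro k
  simp only [size]
  by_cases ho : s.st.1 = .one
  · rw [h1 ho]
    simp only [zero_add, one_mul, zero_mul, add_zero]
    have h3 := not_one ho
    have h5 := (one_facts ho).1
    refine ⟨fun h => .inl ?_, fun h => ?_, fun h => ?_⟩
    · obtain ⟨j, rfl⟩ : ∃ j, k = j + 2 := ⟨k - 2, by omega⟩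
      have := (hB j).2.2 (by omega)
      rw [pow_succ, pow_succ]; omega
    · obtain ⟨j, rfl⟩ : ∃ j, k = j + 1 := ⟨k - 1, by omega⟩
      have := hB.b0 (k := j) (by omega)
      have := X0 s H (by omega) (j := j) (by omega)
      have := pow3_ge j
      rw [pow_succ]; omega
    · obtain ⟨j, rfl⟩ : ∃ j, k = j + 1 := ⟨k - 1, by omega⟩
      have := (hB j).2.1 (by omega)
      have := X1 s H (by omega) ho (j := j) (by omega)
      have := pow3_ge j
      rw [pow_succ]; omega
  · rw [h2 ho]
    simp only [zero_mul, add_zero]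
    refine ⟨fun h => .inl ?_, fun h => ?_, fun h => ?_⟩
    · have : F s.size ≤ F (3 * k + 0) := F_mono (by omega)
      rw [F_eq _ _ (by norm_num)] at this; omega
    · have : F s.size ≤ F (3 * k + 0) := F_mono (by omega)
      rw [F_eq _ _ (by norm_num)] at this; omega
    · have : F s.size ≤ F (3 * k + 1) := F_mono (by omega)
      rw [F_eq _ _ (by norm_num)] at this; omega

/-- Key estimate in the case `n ≡ 0`. -/
theorem key0 (H : ∀ t : RTree, t.size < n → Bd t) (hn : s.size < n) (ho : s.st.1 = .one)
    {j : ℕ} (hj : s.size = 3 * j + 3) :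
    s.tot + 2 * s.X + s.Y ≤ 3 ^ (j + 1) + 1 ∨ Full s := by
  have hB := H s hn
  rcases X_gap H s hn.le with hg | hg
  swap
  · right; exact hg
  rw [show s.size - 1 = 3 * j + 2 by omega, F_eq _ _ (by norm_num)] at hg
  left
  have ht := hB.b0 hj
  obtain ⟨h5, h6⟩ := one_facts ho
  have hm := st_mem s
  have hXp : 0 < s.X := by
    have := pos_st s
    simp only [X]
    generalize s.st = a at *
    obtain ⟨τ, x, y, z⟩ := a
    subst ho
    exact this.1
  have fin : ∀ b c, chk b c s.st = true → s.tot + 2 * s.X + s.Y ≤ b ∨ s.X = c := by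
    intro b c hbc
    simp only [X, Y, tot]
    generalize s.st = a at *
    obtain ⟨τ, x, y, z⟩ := a
    subst ho
    simpa [chk, stot] using hbc
  rcases (by omega : j = 0 ∨ j = 1 ∨ j = 2 ∨ 3 ≤ j) with rfl | rfl | rfl | h3
  · omega
  · have := fin 10 3 (chk6 _ (by have := hm (by omega); rwa [hj] at this))
    norm_num at hg ⊢; omega
  · have := fin 28 9 (chk9 _ (by have := hm (by omega); rwa [hj] at this))
    norm_num at hg ⊢; omega
  · obtain ⟨i, rfl⟩ : ∃ i, j = i + 3 := ⟨j - 3, by omega⟩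
    have := pow3_b i
    rw [pow_succ] at hg ht ⊢
    rw [pow_succ]
    rcases Nat.eq_zero_or_pos s.Y with hy | hy
    · omega
    · have := h6 hy; omega

theorem join02 (H : ∀ t : RTree, t.size < n → Bd t) (hn : c.size + s.size = n)
    (h4 : c.size = 3) {e d : ℕ} (hc : c.st = (.one, 1, e, d)) (he : e = 0 ∧ d = 2 ∨ e = 1 ∧ d = 1)
    (hfull : Full s → Full (join s c)) : Bd (join c s) := by
  have h0 := size_pos s
  obtain ⟨h1, h2, h2'⟩ := tot_join (s := s) hc
  have hB := H s (by omega)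
  have hF := hB.le_F
  intro k
  simp only [size]
  by_cases ho : s.st.1 = .one
  · obtain ⟨h5, h6⟩ := one_facts ho
    have h7 : (join c s).tot ≤ s.tot + 2 * s.X + s.Y := by
      rw [h1 ho]; rcases he with ⟨rfl, rfl⟩ | ⟨rfl, rfl⟩ <;> simp
    have h3 := not_one ho
    refine ⟨fun h => ?_, fun h => ?_, fun h => ?_⟩
    · obtain ⟨j, rfl⟩ : ∃ j, k = j + 1 := ⟨k - 1, by omega⟩
      rcases key0 s H (by omega) ho (j := j) (by omega) with h8 | h8
      · left; omega
      · right; exact ⟨_, .swap _ _, hfull h8⟩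
    · obtain ⟨j, rfl⟩ : ∃ j, k = j + 1 := ⟨k - 1, by omega⟩
      have := (hB j).2.1 (by omega)
      have := X1 s H (by omega) ho (j := j) (by omega)
      rw [pow_succ]; omega
    · obtain ⟨j, rfl⟩ : ∃ j, k = j + 1 := ⟨k - 1, by omega⟩
      have := (hB j).2.2 (by omega)
      rw [pow_succ]; omega
  · have h7 : (join c s).tot ≤ s.tot + if s.st.1 = .ta then s.Y else 0 := by
      rw [h2 ho]; rcases he with ⟨rfl, rfl⟩ | ⟨rfl, rfl⟩ <;> simp
    have hAB := tot_le_AB H s (by omega) ho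
    by_cases ha : s.st.1 = .ta
    · rw [if_pos ha] at h7
      have h8 := h2' ha
      refine ⟨fun h => .inl ?_, fun h => ?_, fun h => ?_⟩
      · obtain ⟨j, rfl⟩ : ∃ j, k = j + 1 := ⟨k - 1, by omega⟩
        rw [show s.size - 1 = 3 * j + 2 by omega, F_eq _ _ (by norm_num)] at hAB
        rw [pow_succ]; omega
      · rcases Nat.eq_zero_or_pos k with rfl | hk
        · have : F s.size = 1 := by rw [show s.size = 1 by omega]; decide
          simp; omega
        obtain ⟨j, rfl⟩ : ∃ j, k = j + 1 := ⟨k - 1, by omega⟩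
        have := (hB j).2.1 (by omega)
        have := pow3_ge j
        rw [pow_succ]; omega
      · rcases Nat.eq_zero_or_pos k with rfl | hk
        · rw [size_two (t := s) (by omega)] at ha; simp [st, jn] at ha
        obtain ⟨j, rfl⟩ : ∃ j, k = j + 1 := ⟨k - 1, by omega⟩
        have := (hB j).2.2 (by omega)
        rw [pow_succ]; omega
    · rw [if_neg ha] at h7
      refine ⟨fun h => .inl ?_, fun h => ?_, fun h => ?_⟩
      · have : F s.size ≤ F (3 * k + 0) := F_mono (by omega)
        rw [F_eq _ _ (by norm_num)] at this; omega
      · have : F s.size ≤ F (3 * k + 1) := F_mono (by omega)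
        rw [F_eq _ _ (by norm_num)] at this; omega
      · have : F s.size ≤ F (3 * k + 2) := F_mono (by omega)
        rw [F_eq _ _ (by norm_num)] at this; omega

end

theorem bd_all (n : ℕ) : ∀ t : RTree, t.size < n → Bd t := by
  induction n with
  | zero => intro t h; omega
  | succ n H =>
    intro t ht
    rcases Nat.lt_succ_iff_lt_or_eq.mp ht with ht | hn
    · exact H t ht
    by_cases h3 : 3 ≤ t.size
    swap
    · intro k; refine ⟨?_, ?_, ?_⟩ <;> intro h <;> omega
    rcases decomp t h3 with h | ⟨c, s, hU, hS, hc⟩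
    · rcases (sm_state h) with rfl | rfl | rfl | rfl | ⟨h1, h2⟩ | ⟨h1, h2⟩
      · simp [size] at h3
      · simp [size] at h3
      · intro k
        simp only [size]
        exact ⟨fun _ => .inr ⟨_, .re (.refl _), .addP2 .leaf rfl⟩, by omega, by omega⟩
      · intro k
        simp only [size]
        refine ⟨fun _ => .inr ⟨_, .re (.refl _), .addLeaf (.addLeaf .leaf ?_) ?_⟩, by omega, by omega⟩ <;>
          simp [size]
      · intro k
        have : t.tot = 2 - 1 + 1 := by simp [tot, h2, stot]
        have := pow3_ge k
        exact ⟨by omega, by omega, by omega⟩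
      · intro k
        have : t.tot = 1 := by simp [tot, h2, stot]
        have := pow3_ge k
        exact ⟨by omega, by omega, by omega⟩
    · refine Bd.of_U hU ?_
      have hsz := hU.size_eq
      simp only [size] at hsz
      rcases (sm_state hS) with rfl | rfl | rfl | rfl | ⟨h1, h2⟩ | ⟨h1, h2⟩
      · simp [size] at hc
      · simp [size] at hc
      · exact join02 _ _ H (by omega) (by simp [size]) (e := 1) (d := 1) (by simp [st, jn]) (by simp) .p3a
      · exact join02 _ _ H (by omega) (by simp [size]) (e := 0) (d := 2) (by simp [st, jn]) (by simp) .p3b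
      · exact join01 _ _ H (by omega) h1 h2
      · exact join00 _ _ H (by omega) h1 h2

theorem main_bound (t : RTree) (k : ℕ) (hk : t.size = 3 * k + 3) :
    t.tot ≤ 3 ^ k + 1 ∨ ∃ t', U t t' ∧ Full t' :=
  (bd_all (t.size + 1) t (by omega) k).1 hk

end RTree
/-! ## Rooted trees inside a graph -/

open RTree in
inductive RT (G : SimpleGraph V) : Finset V → V → RTree → Prop
  | single (r : V) : RT G {r} r .leaf
  | join {A B : Finset V} {r u : V} {t s : RTree} :
      RT G A r t → RT G B u s → Disjoint A B → G.Adj r u →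
      (∀ a ∈ A, ∀ b ∈ B, G.Adj a b → a = r ∧ b = u) → RT G (A ∪ B) r (.join t s)

namespace RT

variable {G : SimpleGraph V}

theorem root_mem {A : Finset V} {r : V} {t : RTree} (h : RT G A r t) : r ∈ A := by
  induction h with
  | single r => simp
  | join _ _ _ _ _ h1 _ => simp [h1]

theorem card_eq {A : Finset V} {r : V} {t : RTree} (h : RT G A r t) : A.card = t.size := by
  induction h with
  | single r => simp [RTree.size]
  | join _ _ hd _ _ h1 h2 => rw [Finset.card_union_of_disjoint hd, h1, h2, RTree.size]

theorem join_inv {A : Finset V} {r : V} {t s : RTree} (h : RT G A r (.join t s)) :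
    ∃ A' B u, A = A' ∪ B ∧ RT G A' r t ∧ RT G B u s ∧ Disjoint A' B ∧ G.Adj r u ∧
      (∀ a ∈ A', ∀ b ∈ B, G.Adj a b → a = r ∧ b = u) := by
  cases h with
  | join h1 h2 h3 h4 h5 => exact ⟨_, _, _, rfl, h1, h2, h3, h4, h5⟩

theorem leaf_inv {A : Finset V} {r : V} (h : RT G A r .leaf) : A = {r} := by
  cases h with
  | single r => rfl

theorem re {t t' : RTree} (h : RTree.Re t t') : ∀ {A : Finset V} {r : V}, RT G A r t → RT G A r t' := by
  induction h with
  | refl => exact fun h => h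
  | trans _ _ h1 h2 => exact fun h => h2 (h1 h)
  | congr s _ ih =>
    intro A r h
    obtain ⟨A', B, u, rfl, h1, h2, h3, h4, h5⟩ := h.join_inv
    exact .join (ih h1) h2 h3 h4 h5
  | comm t s q =>
    intro A r h
    obtain ⟨A', C, v, rfl, h1, h2, h3, h4, h5⟩ := h.join_inv
    obtain ⟨A, B, u, rfl, g1, g2, g3, g4, g5⟩ := h1.join_inv
    have hr := g1.root_mem
    rw [Finset.disjoint_union_left] at h3
    have : A ∪ B ∪ C = (A ∪ C) ∪ B := by rw [Finset.union_assoc, Finset.union_comm B C, Finset.union_assoc]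
    rw [this]
    refine .join (.join g1 h2 h3.1 h4 ?_) g2 ?_ g4 ?_
    · intro a ha b hb hab
      exact h5 a (by simp [ha]) b hb hab
    · rw [Finset.disjoint_union_left]; exact ⟨g3, h3.2.symm⟩
    · intro a ha b hb hab
      rcases Finset.mem_union.1 ha with ha | ha
      · exact g5 a ha b hb hab
      · obtain ⟨rfl, rfl⟩ := h5 b (by simp [hb]) a ha hab.symm
        exact absurd hb (Finset.disjoint_left.1 g3 hr)

theorem u {t t' : RTree} (h : RTree.U t t') : ∀ {A : Finset V} {r : V}, RT G A r t → ∃ r', RT G A r' t' := by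
  induction h with
  | re h => exact fun h1 => ⟨_, h1.re h⟩
  | trans _ _ h1 h2 => exact fun h => let ⟨_, h'⟩ := h1 h; h2 h'
  | swap t s =>
    intro A r h
    obtain ⟨A', B, u, rfl, h1, h2, h3, h4, h5⟩ := h.join_inv
    rw [Finset.union_comm]
    exact ⟨u, .join h2 h1 h3.symm h4.symm fun a ha b hb hab => (h5 b hb a ha hab.symm).symm⟩

/-- Adding a pendant vertex. -/
theorem pendant {A : Finset V} {r : V} {t : RTree} (h : RT G A r t) {v a : V} (hv : v ∉ A) (ha : a ∈ A)
    (hav : G.Adj a v) (huniq : ∀ b ∈ A, G.Adj b v → b = a) : ∃ t', RT G (insert v A) r t' := by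
  induction h with
  | single r =>
    simp only [Finset.mem_singleton] at ha hv
    subst ha
    have : insert v ({a} : Finset V) = {a} ∪ {v} := by ext; simp [or_comm]
    rw [this]
    refine ⟨_, .join (.single a) (.single v) (by simpa using fun h => hv h.symm) hav ?_⟩
    simp
  | @join A B r u t s h1 h2 h3 h4 h5 ih1 ih2 =>
    simp only [Finset.mem_union, not_or] at hv
    rcases Finset.mem_union.1 ha with ha | ha
    · obtain ⟨t', ht'⟩ := ih1 hv.1 ha (fun b hb => huniq b (by simp [hb]))
      rw [← Finset.insert_union]
      refine ⟨_, .join ht' h2 ?_ h4 ?_⟩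
      · simp [hv.2, h3]
      · intro x hx b hb hxb
        rcases Finset.mem_insert.1 hx with rfl | hx
        · have := huniq b (by simp [hb]) hxb.symm
          subst this
          exact absurd hb (Finset.disjoint_left.1 h3 ha)
        · exact h5 x hx b hb hxb
    · obtain ⟨t', ht'⟩ := ih2 hv.2 ha (fun b hb => huniq b (by simp [hb]))
      rw [← Finset.union_insert]
      refine ⟨_, .join h1 ht' ?_ h4 ?_⟩
      · simp [hv.1, h3]
      · intro x hx b hb hxb
        rcases Finset.mem_insert.1 hb with rfl | hb
        · have := huniq x (by simp [hx]) hxb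
          subst this
          exact absurd ha (Finset.disjoint_left.1 h3 hx)
        · exact h5 x hx b hb hxb

theorem walk {A : Finset V} {r : V} {t : RTree} (h : RT G A r t) {a : V} (ha : a ∈ A) :
    ∃ p : G.Walk r a, ∀ x ∈ p.support, x ∈ A := by
  induction h with
  | single r =>
    simp only [Finset.mem_singleton] at ha
    subst ha
    exact ⟨.nil, by simp⟩
  | @join A B r u t s h1 h2 h3 h4 h5 ih1 ih2 =>
    rcases Finset.mem_union.1 ha with ha | ha
    · obtain ⟨p, hp⟩ := ih1 ha
      exact ⟨p, fun x hx => by simp [hp x hx]⟩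
    · obtain ⟨p, hp⟩ := ih2 ha
      refine ⟨.cons h4 p, fun x hx => ?_⟩
      rw [SimpleGraph.Walk.support_cons] at hx
      rcases List.mem_cons.1 hx with rfl | hx
      · simp [h1.root_mem]
      · simp [hp x hx]

theorem exists_univ [Fintype V] (hT : G.IsTree) : ∃ r t, RT G Finset.univ r t := by
  obtain ⟨r⟩ := hT.connected.nonempty
  have hne : ((Finset.univ : Finset (Finset V)).filter (fun A => ∃ t, RT G A r t)).Nonempty :=
    ⟨{r}, by simpa using ⟨_, RT.single r⟩⟩
  obtain ⟨A, hA, hmax⟩ := Finset.exists_max_image _ Finset.card hne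
  obtain ⟨t, ht⟩ := (Finset.mem_filter.1 hA).2
  by_cases hu : A = Finset.univ
  · exact ⟨r, t, hu ▸ ht⟩
  exfalso
  have hr := ht.root_mem
  obtain ⟨x, hx⟩ : ∃ x, x ∉ A := by
    by_contra hcon; push Not at hcon
    exact hu (Finset.eq_univ_iff_forall.2 hcon)
  obtain ⟨p⟩ := hT.connected.preconnected r x
  obtain ⟨d, -, hd1, hd2⟩ := p.exists_boundary_dart (A : Set V) (by simpa using hr) (by simpa using hx)
  have hd1 : d.fst ∈ A := by simpa using hd1
  have hd2 : d.snd ∉ A := by simpa using hd2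
  have hun : ∀ b ∈ A, G.Adj b d.snd → b = d.fst := by
    intro b hb hbv
    obtain ⟨p, hp⟩ := ht.walk hb
    obtain ⟨q, hq⟩ := ht.walk hd1
    by_contra hne
    let w := p.reverse.append q
    have hw : ∀ x ∈ w.support, x ∈ A := by
      intro x hx
      rw [SimpleGraph.Walk.mem_support_append_iff] at hx
      rcases hx with hx | hx
      · exact hp x (by simpa using hx)
      · exact hq x hx
    let P1 : G.Path b d.fst := w.toPath
    have hP1 : ∀ x ∈ P1.1.support, x ∈ A := fun x hx => hw x (w.support_toPath_subset_support hx)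
    let q2 : G.Walk b d.fst := .cons hbv (.cons d.adj.symm .nil)
    have hq2 : q2.IsPath := by
      simp only [q2, SimpleGraph.Walk.cons_isPath_iff]
      simp [hne, hbv.ne, d.adj.ne.symm]
    have := (hT.isAcyclic.subsingleton_path _ _).elim P1 ⟨q2, hq2⟩
    have h2 : d.snd ∈ P1.1.support := by rw [this]; simp [q2]
    exact hd2 (hP1 _ h2)
  obtain ⟨t', ht'⟩ := ht.pendant hd2 hd1 d.adj hun
  have := hmax (insert d.snd A) (by simpa using ⟨t', ht'⟩)
  rw [Finset.card_insert_of_notMem hd2] at this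
  omega

end RT
/-! ## Levels -/

theorem nbrCount_eq (G : SimpleGraph V) (s : Finset V) (v : V) :
    nbrCount G s v = (s.filter (fun w => G.Adj v w)).card := by
  unfold nbrCount
  rw [← Set.ncard_coe_finset]
  congr 1
  ext w; simp

/-- `A` and `B` are disjoint and joined by exactly one edge `ru`. -/
structure Cross (G : SimpleGraph V) (A B : Finset V) (r u : V) : Prop where
  disj : Disjoint A B
  adj : G.Adj r u
  hr : r ∈ A
  hu : u ∈ B
  uniq : ∀ a ∈ A, ∀ b ∈ B, G.Adj a b → a = r ∧ b = u

namespace Cross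

variable {G : SimpleGraph V} {A B : Finset V} {r u : V}

theorem symm (h : Cross G A B r u) : Cross G B A u r :=
  ⟨h.disj.symm, h.adj.symm, h.hu, h.hr, fun a ha b hb hab => (h.uniq b hb a ha hab.symm).symm⟩

theorem nbr_ne (h : Cross G A B r u) {s : Finset V} (hs : s ⊆ A ∪ B) {v : V} (hv : v ∈ A) (hvr : v ≠ r) :
    nbrCount G s v = nbrCount G (s ∩ A) v := by
  rw [nbrCount_eq, nbrCount_eq]
  congr 1
  ext w
  simp only [Finset.mem_filter, Finset.mem_inter]
  constructor
  · rintro ⟨h1, h2⟩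
    refine ⟨⟨h1, ?_⟩, h2⟩
    rcases Finset.mem_union.1 (hs h1) with h3 | h3
    · exact h3
    · exact absurd (h.uniq v hv w h3 h2).1 hvr
  · rintro ⟨⟨h1, -⟩, h2⟩; exact ⟨h1, h2⟩

theorem nbr_root (h : Cross G A B r u) {s : Finset V} (hs : s ⊆ A ∪ B) :
    nbrCount G s r = nbrCount G (s ∩ A) r + if u ∈ s then 1 else 0 := by
  rw [nbrCount_eq, nbrCount_eq]
  have huA : u ∉ A := Finset.disjoint_right.1 h.disj h.hu
  split_ifs with hus
  · rw [← Finset.card_insert_of_notMem (a := u) (by simp [huA])]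
    congr 1
    ext w
    simp only [Finset.mem_filter, Finset.mem_inter, Finset.mem_insert]
    constructor
    · rintro ⟨h1, h2⟩
      rcases Finset.mem_union.1 (hs h1) with h3 | h3
      · exact .inr ⟨⟨h1, h3⟩, h2⟩
      · exact .inl (h.uniq r h.hr w h3 h2).2
    · rintro (rfl | ⟨⟨h1, -⟩, h2⟩)
      · exact ⟨hus, h.adj⟩
      · exact ⟨h1, h2⟩
  · rw [add_zero]
    congr 1
    ext w
    simp only [Finset.mem_filter, Finset.mem_inter]
    constructor
    · rintro ⟨h1, h2⟩
      rcases Finset.mem_union.1 (hs h1) with h3 | h3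
      · exact ⟨⟨h1, h3⟩, h2⟩
      · exact absurd h1 ((h.uniq r h.hr w h3 h2).2 ▸ hus)
    · rintro ⟨⟨h1, -⟩, h2⟩; exact ⟨h1, h2⟩

theorem diss_half (h : Cross G A B r u) {s : Finset V} (hs : s ⊆ A ∪ B) :
    (∀ v ∈ s, v ∈ A → nbrCount G s v ≤ 1) ↔
      IsDissoc G (s ∩ A) ∧ (r ∈ s → u ∈ s → nbrCount G (s ∩ A) r = 0) := by
  have hroot := h.nbr_root hs
  constructor
  · intro h1
    refine ⟨fun v hv => ?_, fun h2 h3 => ?_⟩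
    · obtain ⟨hv1, hv2⟩ := Finset.mem_inter.1 hv
      have := h1 v hv1 hv2
      by_cases hvr : v = r
      · subst hvr; omega
      · rwa [← h.nbr_ne hs hv2 hvr]
    · have := h1 r h2 h.hr
      rw [if_pos h3] at hroot
      omega
  · rintro ⟨h1, h2⟩ v hv hvA
    have h3 := h1 v (Finset.mem_inter.2 ⟨hv, hvA⟩)
    by_cases hvr : v = r
    · subst hvr
      have := h2 hv
      split_ifs at hroot with h4
      · have := this h4; omega
      · omega
    · rwa [h.nbr_ne hs hvA hvr]

theorem diss (h : Cross G A B r u) {s : Finset V} (hs : s ⊆ A ∪ B) :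
    IsDissoc G s ↔ (IsDissoc G (s ∩ A) ∧ IsDissoc G (s ∩ B)) ∧
      (r ∈ s → u ∈ s → nbrCount G (s ∩ A) r = 0 ∧ nbrCount G (s ∩ B) u = 0) := by
  have h1 := h.diss_half hs
  have h2 := h.symm.diss_half (s := s) (by rwa [Finset.union_comm])
  have h3 : IsDissoc G s ↔ (∀ v ∈ s, v ∈ A → nbrCount G s v ≤ 1) ∧ (∀ v ∈ s, v ∈ B → nbrCount G s v ≤ 1) := by
    constructor
    · exact fun h => ⟨fun v hv _ => h v hv, fun v hv _ => h v hv⟩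
    · rintro ⟨ha, hb⟩ v hv
      rcases Finset.mem_union.1 (hs hv) with h | h
      · exact ha v hv h
      · exact hb v hv h
  rw [h3, h1, h2]
  tauto

end Cross

noncomputable def famO (G : SimpleGraph V) (A : Finset V) (r : V) : Finset (Finset V) :=
  A.powerset.filter fun s => IsDissoc G s ∧ r ∉ s

noncomputable def famZ (G : SimpleGraph V) (A : Finset V) (r : V) : Finset (Finset V) :=
  A.powerset.filter fun s => IsDissoc G s ∧ r ∈ s ∧ nbrCount G s r = 0

noncomputable def famI (G : SimpleGraph V) (A : Finset V) (r : V) : Finset (Finset V) :=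
  A.powerset.filter fun s => IsDissoc G s ∧ r ∈ s ∧ nbrCount G s r = 1

noncomputable def famProd (A B : Finset V) (S S' : Finset (Finset V)) : Finset (Finset V) :=
  (A ∪ B).powerset.filter fun s => s ∩ A ∈ S ∧ s ∩ B ∈ S'

/-- Every member has at most `d` elements, and exactly `c` members have `d` elements. -/
def Lvl (S : Finset (Finset V)) (d c : ℕ) : Prop :=
  (∀ s ∈ S, s.card ≤ d) ∧ (S.filter fun s => s.card = d).card = c

theorem Lvl.lift {S : Finset (Finset V)} {d c e : ℕ} (h : Lvl S d c) (hde : d < e) : Lvl S e 0 := by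
  refine ⟨fun s hs => (h.1 s hs).trans hde.le, ?_⟩
  rw [Finset.card_eq_zero, Finset.filter_eq_empty_iff]
  intro s hs
  have := h.1 s hs
  omega

theorem Lvl.union {S S' : Finset (Finset V)} {d c c' : ℕ} (h : Lvl S d c) (h' : Lvl S' d c')
    (hd : Disjoint S S') : Lvl (S ∪ S') d (c + c') := by
  refine ⟨fun s hs => ?_, ?_⟩
  · rcases Finset.mem_union.1 hs with hs | hs
    · exact h.1 s hs
    · exact h'.1 s hs
  · rw [Finset.filter_union, Finset.card_union_of_disjoint (Finset.disjoint_filter_filter hd), h.2, h'.2]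

theorem card_split {A B s : Finset V} (hd : Disjoint A B) (hs : s ⊆ A ∪ B) :
    s.card = (s ∩ A).card + (s ∩ B).card := by
  rw [← Finset.card_union_of_disjoint, ← Finset.inter_union_distrib_left, Finset.inter_eq_left.2 hs]
  exact Disjoint.mono Finset.inter_subset_right Finset.inter_subset_right hd

theorem Lvl.prod {A B : Finset V} {S S' : Finset (Finset V)} {d c d' c' : ℕ} (h : Lvl S d c) (h' : Lvl S' d' c')
    (hd : Disjoint A B) (hS : S ⊆ A.powerset) (hS' : S' ⊆ B.powerset) :
    Lvl (famProd A B S S') (d + d') (c * c') := by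
  refine ⟨fun s hs => ?_, ?_⟩
  · simp only [famProd, Finset.mem_filter, Finset.mem_powerset] at hs
    rw [card_split hd hs.1]
    exact add_le_add (h.1 _ hs.2.1) (h'.1 _ hs.2.2)
  · rw [← h.2, ← h'.2, ← Finset.card_product]
    refine Finset.card_nbij' (fun s => (s ∩ A, s ∩ B)) (fun p => p.1 ∪ p.2) ?_ ?_ ?_ ?_
    · intro s hs
      simp only [famProd, Finset.coe_filter, Finset.mem_filter, Finset.mem_powerset, Set.mem_ofPred_eq] at hs
      simp only [Finset.coe_product, Finset.coe_filter, Set.mem_prod, Set.mem_ofPred_eq]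
      have h1 := card_split hd hs.1.1
      have h2 := h.1 _ hs.1.2.1
      have h3 := h'.1 _ hs.1.2.2
      exact ⟨⟨hs.1.2.1, by omega⟩, ⟨hs.1.2.2, by omega⟩⟩
    · rintro ⟨p, q⟩ hpq
      simp only [Finset.coe_product, Finset.coe_filter, Set.mem_prod, Set.mem_ofPred_eq] at hpq
      simp only [famProd, Finset.coe_filter, Finset.mem_filter, Finset.mem_powerset, Set.mem_ofPred_eq]
      obtain ⟨⟨hp, hp2⟩, ⟨hq, hq2⟩⟩ := hpq
      have hpA := Finset.mem_powerset.1 (hS hp)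
      have hqB := Finset.mem_powerset.1 (hS' hq)
      have e1 : (p ∪ q) ∩ A = p := by
        ext x; have : x ∈ A → x ∉ B := fun h => Finset.disjoint_left.1 hd h; have : x ∈ p → x ∈ A := fun h => hpA h; have : x ∈ q → x ∈ B := fun h => hqB h
        simp only [Finset.mem_inter, Finset.mem_union]; tauto
      have e2 : (p ∪ q) ∩ B = q := by
        ext x; have : x ∈ A → x ∉ B := fun h => Finset.disjoint_left.1 hd h; have : x ∈ p → x ∈ A := fun h => hpA h; have : x ∈ q → x ∈ B := fun h => hqB h
        simp only [Finset.mem_inter, Finset.mem_union]; tauto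
      rw [e1, e2]
      refine ⟨⟨Finset.union_subset_union hpA hqB, hp, hq⟩, ?_⟩
      rw [Finset.card_union_of_disjoint (Disjoint.mono hpA hqB hd), hp2, hq2]
    · intro s hs
      simp only [famProd, Finset.coe_filter, Finset.mem_filter, Finset.mem_powerset, Set.mem_ofPred_eq] at hs
      simp only
      rw [← Finset.inter_union_distrib_left, Finset.inter_eq_left.2 hs.1.1]
    · rintro ⟨p, q⟩ hpq
      simp only [Finset.coe_product, Finset.coe_filter, Set.mem_prod, Set.mem_ofPred_eq] at hpq
      obtain ⟨⟨hp, hp2⟩, ⟨hq, hq2⟩⟩ := hpq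
      have hpA := Finset.mem_powerset.1 (hS hp)
      have hqB := Finset.mem_powerset.1 (hS' hq)
      have e1 : (p ∪ q) ∩ A = p := by
        ext x; have : x ∈ A → x ∉ B := fun h => Finset.disjoint_left.1 hd h; have : x ∈ p → x ∈ A := fun h => hpA h; have : x ∈ q → x ∈ B := fun h => hqB h
        simp only [Finset.mem_inter, Finset.mem_union]; tauto
      have e2 : (p ∪ q) ∩ B = q := by
        ext x; have : x ∈ A → x ∉ B := fun h => Finset.disjoint_left.1 hd h; have : x ∈ p → x ∈ A := fun h => hpA h; have : x ∈ q → x ∈ B := fun h => hqB h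
        simp only [Finset.mem_inter, Finset.mem_union]; tauto
      simp only [e1, e2]

theorem famO_sub (G : SimpleGraph V) (A : Finset V) (r : V) : famO G A r ⊆ A.powerset := Finset.filter_subset _ _
theorem famZ_sub (G : SimpleGraph V) (A : Finset V) (r : V) : famZ G A r ⊆ A.powerset := Finset.filter_subset _ _
theorem famI_sub (G : SimpleGraph V) (A : Finset V) (r : V) : famI G A r ⊆ A.powerset := Finset.filter_subset _ _

theorem disj_OZ (G : SimpleGraph V) (A : Finset V) (r : V) : Disjoint (famO G A r) (famZ G A r) := by
  rw [Finset.disjoint_left]; simp only [famO, famZ, Finset.mem_filter]; tauto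
theorem disj_OZI (G : SimpleGraph V) (A : Finset V) (r : V) :
    Disjoint (famO G A r ∪ famZ G A r) (famI G A r) := by
  rw [Finset.disjoint_left]; simp only [famO, famZ, famI, Finset.mem_filter, Finset.mem_union]
  rintro s (⟨-, -, h⟩ | ⟨-, -, -, h⟩) ⟨-, -, h2, h3⟩
  · exact h h2
  · omega

theorem fam_all (G : SimpleGraph V) (A : Finset V) (r : V) :
    famO G A r ∪ famZ G A r ∪ famI G A r = A.powerset.filter fun s => IsDissoc G s := by
  ext s
  simp only [famO, famZ, famI, Finset.mem_filter, Finset.mem_union]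
  constructor
  · tauto
  · rintro ⟨h1, h2⟩
    by_cases hr : r ∈ s
    · have := h2 r hr
      rcases (by omega : nbrCount G s r = 0 ∨ nbrCount G s r = 1) with h | h <;> tauto
    · tauto

namespace Cross

variable {G : SimpleGraph V} {A B : Finset V} {r u : V}

theorem famO_eq (h : Cross G A B r u) : famO G (A ∪ B) r =
    famProd A B (famO G A r) (famO G B u ∪ famZ G B u ∪ famI G B u) := by
  ext s
  rw [fam_all]
  simp only [famO, famProd, Finset.mem_filter, Finset.mem_powerset]
  refine and_congr_right fun hs => ?_
  rw [h.diss hs]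
  have := h.hr
  simp only [Finset.mem_inter, Finset.inter_subset_right, true_and]
  tauto

theorem famZ_eq (h : Cross G A B r u) : famZ G (A ∪ B) r =
    famProd A B (famZ G A r) (famO G B u) := by
  ext s
  simp only [famO, famZ, famProd, Finset.mem_filter, Finset.mem_powerset]
  refine and_congr_right fun hs => ?_
  rw [h.diss hs, h.nbr_root hs]
  have := h.hr
  have := h.hu
  simp only [Finset.mem_inter, Finset.inter_subset_right, true_and]
  by_cases hu : u ∈ s
  · simp [hu]; tauto
  · simp [hu]; tauto

theorem famI_eq (h : Cross G A B r u) : famI G (A ∪ B) r =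
    famProd A B (famI G A r) (famO G B u) ∪ famProd A B (famZ G A r) (famZ G B u) := by
  ext s
  simp only [famO, famZ, famI, famProd, Finset.mem_filter, Finset.mem_powerset, Finset.mem_union, ← and_or_left]
  refine and_congr_right fun hs => ?_
  rw [h.diss hs, h.nbr_root hs]
  have := h.hr
  have := h.hu
  simp only [Finset.mem_inter, Finset.inter_subset_right, true_and]
  by_cases hu : u ∈ s
  · simp [hu]; tauto
  · simp [hu]; tauto

theorem famI_disj (_h : Cross G A B r u) :
    Disjoint (famProd A B (famI G A r) (famO G B u)) (famProd A B (famZ G A r) (famZ G B u)) := by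
  rw [Finset.disjoint_left]
  simp only [famO, famZ, famI, famProd, Finset.mem_filter]
  tauto

end Cross

def Lev (G : SimpleGraph V) (A : Finset V) (r : V) : St → Prop
  | (.one, x, y, z) => ∃ M, Lvl (famO G A r) M x ∧ Lvl (famZ G A r) M y ∧ Lvl (famI G A r) M z
  | (.ta, x, y, z) => ∃ M, Lvl (famO G A r) M x ∧ Lvl (famZ G A r) (M + 1) y ∧ Lvl (famI G A r) (M + 1) z
  | (.tb, x, y, z) => ∃ M, Lvl (famO G A r) M x ∧ Lvl (famZ G A r) M y ∧ Lvl (famI G A r) (M + 1) z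

theorem Lvl.all {G : SimpleGraph V} {A : Finset V} {r : V} {d x y z : ℕ} (h1 : Lvl (famO G A r) d x)
    (h2 : Lvl (famZ G A r) d y) (h3 : Lvl (famI G A r) d z) :
    Lvl (famO G A r ∪ famZ G A r ∪ famI G A r) d (x + y + z) :=
  (h1.union h2 (disj_OZ _ _ _)).union h3 (disj_OZI _ _ _)

theorem Lev.all {G : SimpleGraph V} {A : Finset V} {r : V} {a : St} (h : Lev G A r a) :
    ∃ d, Lvl (famO G A r ∪ famZ G A r ∪ famI G A r) d (stot a) := by
  obtain ⟨τ, x, y, z⟩ := a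
  cases τ
  · obtain ⟨M, h1, h2, h3⟩ := h
    exact ⟨M, h1.all h2 h3⟩
  · obtain ⟨M, h1, h2, h3⟩ := h
    refine ⟨M + 1, ?_⟩
    have := (h1.lift (Nat.lt_succ_self M)).all h2 h3
    simpa [stot] using this
  · obtain ⟨M, h1, h2, h3⟩ := h
    refine ⟨M + 1, ?_⟩
    have := (h1.lift (Nat.lt_succ_self M)).all (h2.lift (Nat.lt_succ_self M)) h3
    simpa [stot] using this

theorem Cross.lvlO {G : SimpleGraph V} {A B : Finset V} {r u : V} (h : Cross G A B r u) {d x e p q w m c : ℕ}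
    (h1 : Lvl (famO G A r) d x) (h2 : Lvl (famO G B u) e p) (h3 : Lvl (famZ G B u) e q)
    (h4 : Lvl (famI G B u) e w) (hm : m = d + e) (hc : c = x * (p + q + w)) : Lvl (famO G (A ∪ B) r) m c := by
  rw [h.famO_eq, hm, hc]
  refine h1.prod (h2.all h3 h4) h.disj (famO_sub _ _ _) ?_
  rw [fam_all]; exact Finset.filter_subset _ _

theorem Cross.lvlZ {G : SimpleGraph V} {A B : Finset V} {r u : V} (h : Cross G A B r u) {d y e p m c : ℕ}
    (h1 : Lvl (famZ G A r) d y) (h2 : Lvl (famO G B u) e p) (hm : m = d + e) (hc : c = y * p) :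
    Lvl (famZ G (A ∪ B) r) m c := by
  rw [h.famZ_eq, hm, hc]
  exact h1.prod h2 h.disj (famZ_sub _ _ _) (famO_sub _ _ _)

theorem Cross.lvlI {G : SimpleGraph V} {A B : Finset V} {r u : V} (h : Cross G A B r u)
    {d z e p d' y e' q m c : ℕ}
    (h1 : Lvl (famI G A r) d z) (h2 : Lvl (famO G B u) e p)
    (h3 : Lvl (famZ G A r) d' y) (h4 : Lvl (famZ G B u) e' q) (hm : m = d + e) (hm' : m = d' + e')
    (hc : c = z * p + y * q) :
    Lvl (famI G (A ∪ B) r) m c := by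
  rw [h.famI_eq, hc]
  refine .union ?_ ?_ h.famI_disj
  · rw [hm]; exact h1.prod h2 h.disj (famI_sub _ _ _) (famO_sub _ _ _)
  · rw [hm']; exact h3.prod h4 h.disj (famZ_sub _ _ _) (famZ_sub _ _ _)

theorem Lev.join {G : SimpleGraph V} {A B : Finset V} {r u : V} {a b : St} (ha : Lev G A r a) (hb : Lev G B u b)
    (h : Cross G A B r u) : Lev G (A ∪ B) r (jn a b) := by
  obtain ⟨τ, x, y, z⟩ := a
  obtain ⟨τ', p, q, w⟩ := b
  cases τ <;> cases τ' <;> obtain ⟨M, h1, h2, h3⟩ := ha <;> obtain ⟨N, g1, g2, g3⟩ := hb <;>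
    simp only [jn, Lev]
  -- one one
  · refine ⟨M + N, h.lvlO h1 g1 g2 g3 ?_ ?_, h.lvlZ h2 g1 ?_ ?_, h.lvlI h3 g1 h2 g2 ?_ ?_ ?_⟩ <;> first | rfl | omega | ring
  -- one ta
  · refine ⟨M + N + 1, h.lvlO h1 (g1.lift (Nat.lt_succ_self N)) g2 g3 ?_ ?_,
      h.lvlZ (h2.lift (Nat.lt_succ_self M)) g1 ?_ ?_,
      h.lvlI (h3.lift (Nat.lt_succ_self M)) g1 h2 g2 ?_ ?_ ?_⟩ <;> first | rfl | omega | ring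
  -- one tb
  · refine ⟨M + N + 1, h.lvlO h1 (g1.lift (Nat.lt_succ_self N)) (g2.lift (Nat.lt_succ_self N)) g3 ?_ ?_,
      h.lvlZ (h2.lift (Nat.lt_succ_self M)) g1 ?_ ?_,
      h.lvlI (h3.lift (Nat.lt_succ_self M)) g1 (h2.lift (Nat.lt_succ_self M)) g2 ?_ ?_ ?_⟩ <;> first | rfl | omega | ring
  -- ta one
  · refine ⟨M + N, h.lvlO h1 g1 g2 g3 ?_ ?_, h.lvlZ h2 g1 ?_ ?_, h.lvlI h3 g1 h2 g2 ?_ ?_ ?_⟩ <;> first | rfl | omega | ring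
  -- ta ta
  · refine ⟨M + N + 1, h.lvlO h1 (g1.lift (Nat.lt_succ_self N)) g2 g3 ?_ ?_, h.lvlZ h2 g1 ?_ ?_,
      h.lvlI (h3.lift (Nat.lt_succ_self _)) g1 h2 g2 ?_ ?_ ?_⟩ <;> first | rfl | omega | ring
  -- ta tb
  · refine ⟨M + N + 1, h.lvlO h1 (g1.lift (Nat.lt_succ_self N)) (g2.lift (Nat.lt_succ_self N)) g3 ?_ ?_,
      h.lvlZ h2 g1 ?_ ?_, h.lvlI h3 g1 h2 g2 ?_ ?_ ?_⟩ <;> first | rfl | omega | ring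
  -- tb one
  · refine ⟨M + N, h.lvlO h1 g1 g2 g3 ?_ ?_, h.lvlZ h2 g1 ?_ ?_,
      h.lvlI h3 g1 (h2.lift (Nat.lt_succ_self M)) g2 ?_ ?_ ?_⟩ <;> first | rfl | omega | ring
  -- tb ta
  · refine ⟨M + N + 1, h.lvlO h1 (g1.lift (Nat.lt_succ_self N)) g2 g3 ?_ ?_,
      h.lvlZ (h2.lift (Nat.lt_succ_self M)) g1 ?_ ?_, h.lvlI h3 g1 h2 g2 ?_ ?_ ?_⟩ <;> first | rfl | omega | ring
  -- tb tb
  · refine ⟨M + N + 1, h.lvlO h1 (g1.lift (Nat.lt_succ_self N)) (g2.lift (Nat.lt_succ_self N)) g3 ?_ ?_,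
      h.lvlZ (h2.lift (Nat.lt_succ_self M)) g1 ?_ ?_,
      h.lvlI h3 g1 (h2.lift (Nat.lt_succ_self M)) g2 ?_ ?_ ?_⟩ <;> first | rfl | omega | ring

theorem RT.lev {G : SimpleGraph V} {A : Finset V} {r : V} {t : RTree} (h : RT G A r t) : Lev G A r t.st := by
  induction h with
  | single r =>
    have hps : ({r} : Finset V).powerset = {∅, {r}} := by
      ext s; simp [Finset.subset_singleton_iff]
    have hO : famO G {r} r = {∅} := by
      ext s
      simp only [famO, hps, Finset.mem_filter, Finset.mem_insert, Finset.mem_singleton]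
      constructor
      · rintro ⟨rfl | rfl, -, h⟩
        · rfl
        · simp at h
      · rintro rfl; exact ⟨.inl rfl, by simp [IsDissoc], by simp⟩
    have h0 : nbrCount G {r} r = 0 := by
      rw [nbrCount_eq, Finset.card_eq_zero, Finset.filter_eq_empty_iff]; simp
    have hZ : famZ G {r} r = {{r}} := by
      ext s
      simp only [famZ, hps, Finset.mem_filter, Finset.mem_insert, Finset.mem_singleton]
      constructor
      · rintro ⟨rfl | rfl, -, h, -⟩
        · simp at h
        · rfl
      · rintro rfl; exact ⟨.inr rfl, by simp [IsDissoc, h0], by simp, h0⟩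
    have hI : famI G {r} r = ∅ := by
      ext s
      simp only [famI, hps, Finset.mem_filter, Finset.mem_insert, Finset.mem_singleton]
      constructor
      · rintro ⟨rfl | rfl, -, h, h'⟩
        · simp at h
        · omega
      · simp
    refine ⟨0, ?_, ?_, ?_⟩
    · rw [hO]; exact ⟨by simp, by simp [Finset.filter_singleton]⟩
    · rw [hZ]; exact ⟨by simp, by simp [Finset.filter_singleton]⟩
    · rw [hI]; exact ⟨by simp, by simp⟩
  | join h1 h2 h3 h4 h5 ih1 ih2 =>
    exact ih1.join ih2 ⟨h3, h4, h1.root_mem, h2.root_mem, h5⟩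

theorem RT.numMaxDissoc_eq [Fintype V] {G : SimpleGraph V} {r : V} {t : RTree} (h : RT G Finset.univ r t) :
    numMaxDissoc G = t.tot := by
  obtain ⟨d, hd1, hd2⟩ := h.lev.all
  rw [fam_all] at hd1 hd2
  have hle : ∀ s : Finset V, IsDissoc G s → s.card ≤ d := fun s hs => hd1 s (by simp [hs])
  have hpos := RTree.tot_pos t
  obtain ⟨s0, hs0⟩ := Finset.card_pos.1 (by rw [hd2]; exact hpos)
  simp only [Finset.mem_filter, Finset.mem_powerset, Finset.subset_univ, true_and] at hs0
  have hnum : dissNumOn G Set.univ = d := by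
    unfold dissNumOn
    apply le_antisymm
    · apply csSup_le'
      rintro n ⟨s, -, hs, rfl⟩
      exact hle s hs
    · refine le_csSup ⟨d, ?_⟩ ⟨s0, by simp, hs0⟩
      rintro n ⟨s, -, hs, rfl⟩
      exact hle s hs
  unfold numMaxDissoc numMaxDissocOn RTree.tot
  rw [← hd2, Nat.card_eq_fintype_card, Fintype.card_subtype]
  congr 1
  ext s
  simp [IsMaxDissocOn, hnum]
/-! ## The extremal family -/

namespace RTree

/-- Only branches of order three at the root. -/
inductive Full0 : RTree → Prop
  | leaf : Full0 .leaf
  | p3a {t} : Full0 t → Full0 (.join t (.join .leaf (.join .leaf .leaf)))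
  | p3b {t} : Full0 t → Full0 (.join t (.join (.join .leaf .leaf) .leaf))

theorem full_cases {t : RTree} (h : Full t) :
    (t.size % 3 = 1 ∧ ∃ t0, Full0 t0 ∧ Re t t0) ∨
    (t.size % 3 = 2 ∧ ∃ t0, Full0 t0 ∧ Re t (.join t0 .leaf)) ∨
    (t.size % 3 = 0 ∧ ∃ t0, Full0 t0 ∧
      (Re t (.join (.join t0 .leaf) .leaf) ∨ Re t (.join t0 (.join .leaf .leaf)))) := by
  have key : ∀ (b : RTree) (t : RTree), b.size = 3 → (∀ t0, Full0 t0 → Full0 (.join t0 b)) →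
      ((t.size % 3 = 1 ∧ ∃ t0, Full0 t0 ∧ Re t t0) ∨
      (t.size % 3 = 2 ∧ ∃ t0, Full0 t0 ∧ Re t (.join t0 .leaf)) ∨
      (t.size % 3 = 0 ∧ ∃ t0, Full0 t0 ∧
        (Re t (.join (.join t0 .leaf) .leaf) ∨ Re t (.join t0 (.join .leaf .leaf))))) →
      (((t.join b).size % 3 = 1 ∧ ∃ t0, Full0 t0 ∧ Re (t.join b) t0) ∨
      ((t.join b).size % 3 = 2 ∧ ∃ t0, Full0 t0 ∧ Re (t.join b) (.join t0 .leaf)) ∨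
      ((t.join b).size % 3 = 0 ∧ ∃ t0, Full0 t0 ∧
        (Re (t.join b) (.join (.join t0 .leaf) .leaf) ∨ Re (t.join b) (.join t0 (.join .leaf .leaf))))) := by
    intro b t hb hF h
    simp only [size, hb, Nat.add_mod_right]
    rcases h with ⟨h, t0, h0, hr⟩ | ⟨h, t0, h0, hr⟩ | ⟨h, t0, h0, hr⟩
    · exact .inl ⟨h, _, hF _ h0, .congr _ hr⟩
    · exact .inr (.inl ⟨h, _, hF _ h0, .trans (.congr _ hr) (.comm _ _ _)⟩)
    · refine .inr (.inr ⟨h, _, hF _ h0, ?_⟩)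
      rcases hr with hr | hr
      · exact .inl (.trans (.congr _ hr) (.trans (.comm _ _ _) (.congr _ (.comm _ _ _))))
      · exact .inr (.trans (.congr _ hr) (.comm _ _ _))
  induction h with
  | leaf => exact .inl ⟨by simp [size], _, .leaf, .refl _⟩
  | p3a _ ih => exact key _ _ (by simp [size]) (fun _ h => .p3a h) ih
  | p3b _ ih => exact key _ _ (by simp [size]) (fun _ h => .p3b h) ih
  | addLeaf _ hne ih =>
    rcases ih with ⟨h, t0, h0, hr⟩ | ⟨h, t0, h0, hr⟩ | ⟨h, t0, h0, hr⟩
    · exact .inr (.inl ⟨by simp only [size]; omega, _, h0, .congr _ hr⟩)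
    · exact .inr (.inr ⟨by simp only [size]; omega, _, h0, .inl (.congr _ hr)⟩)
    · exact absurd h hne
  | addP2 _ hne ih =>
    rcases ih with ⟨h, t0, h0, hr⟩ | ⟨h, t0, h0, hr⟩ | ⟨h, t0, h0, hr⟩
    · exact .inr (.inr ⟨by simp only [size]; omega, _, h0, .inr (.congr _ hr)⟩)
    · omega
    · omega

end RTree

/-- Edge relation inside one branch. -/
def brRel (b : Bool) (j j' : Fin 3) : Prop :=
  (b = true ∧ ((j = 0 ∧ j' = 1) ∨ (j = 1 ∧ j' = 2))) ∨ (b = false ∧ j = 0 ∧ (j' = 1 ∨ j' = 2))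

/-- A labelling of a union of order-three branches at `w`. -/
structure Lab (G : SimpleGraph V) (A : Finset V) (w : V) (l : ℕ) (bt : Fin l → Bool)
    (f : Fin l → Fin 3 → V) : Prop where
  mem : ∀ v, v ∈ A ↔ v = w ∨ ∃ i j, f i j = v
  inj : ∀ i j i' j', f i j = f i' j' → i = i' ∧ j = j'
  ne : ∀ i j, f i j ≠ w
  adjw : ∀ i j, G.Adj w (f i j) ↔ j = 0
  adj : ∀ i j i' j', G.Adj (f i j) (f i' j') ↔ i = i' ∧ (brRel (bt i) j j' ∨ brRel (bt i) j' j)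

/-- A labelled branch. -/
structure Br (G : SimpleGraph V) (B : Finset V) (u : V) (b : Bool) (g : Fin 3 → V) : Prop where
  mem : ∀ v, v ∈ B ↔ ∃ j, g j = v
  inj : ∀ j j', g j = g j' → j = j'
  zero : g 0 = u
  adj : ∀ j j', G.Adj (g j) (g j') ↔ brRel b j j' ∨ brRel b j' j

theorem RT.br_a {G : SimpleGraph V} {B : Finset V} {u : V}
    (h : RT G B u (.join .leaf (.join .leaf .leaf))) : ∃ g, Br G B u true g := by
  obtain ⟨A, B, v, rfl, h1, h2, h3, h4, h5⟩ := h.join_inv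
  obtain ⟨A', B', x, rfl, g1, g2, g3, g4, g5⟩ := h2.join_inv
  have e1 := h1.leaf_inv
  have e2 := g1.leaf_inv
  have e3 := g2.leaf_inv
  subst e1 e2 e3
  have huv := h4.ne
  have hvx := g4.ne
  have hux : u ≠ x := by rintro rfl; simp at h3
  have hnux : ¬ G.Adj u x := fun h => hvx (h5 u (by simp) x (by simp) h).2.symm
  refine ⟨![u, v, x], ?_, ?_, rfl, ?_⟩
  · intro y; simp [Fin.exists_fin_succ, eq_comm] <;> tauto
  · intro j j'; fin_cases j <;> fin_cases j' <;> simp [huv, hvx, hux, huv.symm, hvx.symm, hux.symm]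
  · intro j j'
    fin_cases j <;> fin_cases j' <;> simp [brRel, h4, g4, h4.symm, g4.symm, hnux, G.adj_comm x u]

theorem RT.br_b {G : SimpleGraph V} {B : Finset V} {u : V}
    (h : RT G B u (.join (.join .leaf .leaf) .leaf)) : ∃ g, Br G B u false g := by
  obtain ⟨A, B, x, rfl, h1, h2, h3, h4, h5⟩ := h.join_inv
  obtain ⟨A', B', v, rfl, g1, g2, g3, g4, g5⟩ := h1.join_inv
  have e1 := h2.leaf_inv
  have e2 := g1.leaf_inv
  have e3 := g2.leaf_inv
  subst e1 e2 e3
  have huv := g4.ne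
  have hux := h4.ne
  have hvx : v ≠ x := by rintro rfl; simp at h3
  have hnvx : ¬ G.Adj v x := fun h => huv (h5 v (by simp) x (by simp) h).1.symm
  refine ⟨![u, v, x], ?_, ?_, rfl, ?_⟩
  · intro y; simp [Fin.exists_fin_succ, eq_comm] <;> tauto
  · intro j j'; fin_cases j <;> fin_cases j' <;> simp [huv, hvx, hux, huv.symm, hvx.symm, hux.symm]
  · intro j j'
    fin_cases j <;> fin_cases j' <;> simp [brRel, h4, g4, h4.symm, g4.symm, hnvx, G.adj_comm x v]

theorem Lab.cons {G : SimpleGraph V} {A B : Finset V} {w u : V} {l : ℕ} {bt : Fin l → Bool}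
    {f : Fin l → Fin 3 → V} {b : Bool} {g : Fin 3 → V} (h : Lab G A w l bt f) (hb : Br G B u b g)
    (hd : Disjoint A B) (hwu : G.Adj w u) (hx : ∀ a ∈ A, ∀ b ∈ B, G.Adj a b → a = w ∧ b = u) :
    Lab G (A ∪ B) w (l + 1) (Fin.cons b bt) (Fin.cons g f) := by
  have hgB : ∀ j, g j ∈ B := fun j => (hb.mem _).2 ⟨j, rfl⟩
  have hfA : ∀ i j, f i j ∈ A := fun i j => (h.mem _).2 (.inr ⟨i, j, rfl⟩)
  have hwA : w ∈ A := (h.mem _).2 (.inl rfl)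
  have hne : ∀ a ∈ A, ∀ j, a ≠ g j := fun a ha j e => Finset.disjoint_left.1 hd ha (e ▸ hgB j)
  have hna : ∀ i j j', ¬ G.Adj (f i j) (g j') := fun i j j' e => h.ne i j (hx _ (hfA i j) _ (hgB j') e).1
  refine ⟨?_, ?_, ?_, ?_, ?_⟩
  · intro v
    rw [Finset.mem_union, h.mem, hb.mem]
    constructor
    · rintro ((e | ⟨i, j, e⟩) | ⟨j, e⟩)
      · exact .inl e
      · exact .inr ⟨i.succ, j, e⟩
      · exact .inr ⟨0, j, e⟩
    · rintro (e | ⟨i, j, e⟩)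
      · exact .inl (.inl e)
      · cases i using Fin.cases with
        | zero => exact .inr ⟨j, e⟩
        | succ i => exact .inl (.inr ⟨i, j, e⟩)
  · intro i j i' j'
    cases i using Fin.cases <;> cases i' using Fin.cases <;> simp only [Fin.cons_zero, Fin.cons_succ]
    · intro e; exact ⟨trivial, hb.inj _ _ e⟩
    · intro e; exact absurd e.symm (hne _ (hfA _ _) _)
    · intro e; exact absurd e (hne _ (hfA _ _) _)
    · intro e; exact ⟨by rw [(h.inj _ _ _ _ e).1], (h.inj _ _ _ _ e).2⟩
  · intro i j
    cases i using Fin.cases <;> simp only [Fin.cons_zero, Fin.cons_succ]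
    · exact (hne _ hwA _).symm
    · exact h.ne _ _
  · intro i j
    cases i using Fin.cases <;> simp only [Fin.cons_zero, Fin.cons_succ]
    · constructor
      · intro e
        apply hb.inj
        rw [hb.zero]; exact (hx _ hwA _ (hgB j) e).2
      · rintro rfl; rw [hb.zero]; exact hwu
    · exact h.adjw _ _
  · intro i j i' j'
    cases i using Fin.cases <;> cases i' using Fin.cases <;> simp only [Fin.cons_zero, Fin.cons_succ]
    · simpa using hb.adj _ _
    · simpa [Fin.succ_ne_zero, eq_comm] using fun e => hna _ _ _ e.symm
    · simpa [Fin.succ_ne_zero, eq_comm] using fun e => hna _ _ _ e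
    · simpa using h.adj _ _ _ _

theorem RT.lab {G : SimpleGraph V} {t : RTree} (ht : RTree.Full0 t) : ∀ {A : Finset V} {w : V},
    RT G A w t → ∃ l bt f, Lab G A w l bt f := by
  induction ht with
  | leaf =>
    intro A w h
    rw [h.leaf_inv]
    exact ⟨0, Fin.elim0, Fin.elim0, by simp, fun i => i.elim0, fun i => i.elim0, fun i => i.elim0, fun i => i.elim0⟩
  | p3a _ ih =>
    intro A w h
    obtain ⟨A', B, u, rfl, h1, h2, h3, h4, h5⟩ := h.join_inv
    obtain ⟨l, bt, f, hl⟩ := ih h1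
    obtain ⟨g, hg⟩ := h2.br_a
    exact ⟨_, _, _, hl.cons hg h3 h4 h5⟩
  | p3b _ ih =>
    intro A w h
    obtain ⟨A', B, u, rfl, h1, h2, h3, h4, h5⟩ := h.join_inv
    obtain ⟨l, bt, f, hl⟩ := ih h1
    obtain ⟨g, hg⟩ := h2.br_b
    exact ⟨_, _, _, hl.cons hg h3 h4 h5⟩

/-- The final isomorphism. -/
theorem Lab.iso {G : SimpleGraph V} {A : Finset V} {w : V} {l : ℕ} {bt : Fin l → Bool}
    {f : Fin l → Fin 3 → V} (h : Lab G A w l bt f) (pa : Bool) (s : Fin 2 → V) (hA : ∀ j, s j ∉ A)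
    (hs : s 0 ≠ s 1) (hall : ∀ v, v ∈ A ∨ ∃ j, s j = v)
    (hw : ∀ j, G.Adj w (s j) ↔ (pa = false ∨ j = 0)) (hss : G.Adj (s 0) (s 1) ↔ pa = true)
    (hf : ∀ i j k, ¬ G.Adj (f i j) (s k)) : Nonempty (G ≃g HModel pa l bt) := by
  have hfA : ∀ i j, f i j ∈ A := fun i j => (h.mem _).2 (.inr ⟨i, j, rfl⟩)
  have hwA : w ∈ A := (h.mem _).2 (.inl rfl)
  have hws : ∀ j, w ≠ s j := fun j e => hA j (e ▸ hwA)
  have hfs : ∀ i j k, f i j ≠ s k := fun i j k e => hA k (e ▸ hfA i j)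
  have hsinj : ∀ j k, s j = s k → j = k := by
    intro j k; fin_cases j <;> fin_cases k <;> simp [hs, hs.symm]
  let φ : Unit ⊕ (Fin 2 ⊕ Fin l × Fin 3) → V := fun x => match x with
    | .inl _ => w
    | .inr (.inl j) => s j
    | .inr (.inr p) => f p.1 p.2
  have hinj : Function.Injective φ := by
    rintro (_ | j | ⟨i, j⟩) (_ | j' | ⟨i', j'⟩) e <;> simp only [φ] at e
    · rfl
    · exact absurd e (hws _)
    · exact absurd e.symm (h.ne _ _)
    · exact absurd e.symm (hws _)
    · rw [hsinj _ _ e]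
    · exact absurd e.symm (hfs _ _ _)
    · exact absurd e (h.ne _ _)
    · exact absurd e (hfs _ _ _)
    · obtain ⟨rfl, rfl⟩ := h.inj _ _ _ _ e; rfl
  have hsurj : Function.Surjective φ := by
    intro v
    rcases hall v with hv | ⟨j, rfl⟩
    · rcases (h.mem v).1 hv with rfl | ⟨i, j, rfl⟩
      · exact ⟨.inl (), rfl⟩
      · exact ⟨.inr (.inr (i, j)), rfl⟩
    · exact ⟨.inr (.inl j), rfl⟩
  have hbr : ∀ b j, ¬ brRel b j j := by
    intro b j; cases b <;> fin_cases j <;> simp [brRel]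
  have hadj : ∀ x y, G.Adj (φ x) (φ y) ↔ (HModel pa l bt).Adj x y := by
    rintro (_ | j | ⟨i, j⟩) (_ | j' | ⟨i', j'⟩) <;>
      simp only [φ, HModel, SimpleGraph.fromRel_adj, HBase]
    · simp
    · simpa using hw j'
    · simpa using h.adjw _ _
    · rw [G.adj_comm]; simpa using hw j
    · have hss' := hss
      rw [G.adj_comm] at hss'
      fin_cases j <;> fin_cases j' <;> simp [hss, hss']
    · rw [G.adj_comm]; simpa using hf _ _ _
    · rw [G.adj_comm]; simpa using h.adjw _ _
    · simpa using hf _ _ _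
    · rw [h.adj]
      change _ ↔ _ ∧ (i = i' ∧ brRel (bt i) j j' ∨ i' = i ∧ brRel (bt i') j' j)
      constructor
      · rintro ⟨rfl, e⟩
        refine ⟨?_, by simpa using e⟩
        intro h
        simp only [Sum.inr.injEq, Prod.mk.injEq, true_and] at h
        subst h
        exact hbr _ _ (or_self_iff.1 e)
      · rintro ⟨-, ⟨rfl, e⟩ | ⟨rfl, e⟩⟩
        · exact ⟨rfl, .inl e⟩
        · exact ⟨rfl, .inr e⟩
  exact ⟨RelIso.symm ⟨Equiv.ofBijective φ ⟨hinj, hsurj⟩, hadj _ _⟩⟩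

theorem RT.full_iso [Fintype V] {G : SimpleGraph V} {r : V} {t : RTree} (h : RT G Finset.univ r t)
    (ht : RTree.Full t) (hm : t.size % 3 = 0) : ∃ pa l bt, Nonempty (G ≃g HModel pa l bt) := by
  rcases RTree.full_cases ht with ⟨h', -⟩ | ⟨h', -⟩ | ⟨-, t0, h0, hr⟩
  · omega
  · omega
  rcases hr with hr | hr
  · have h := h.re hr
    obtain ⟨A', B, y, hU, h1, h2, h3, h4, h5⟩ := h.join_inv
    obtain ⟨A, B', x, rfl, g1, g2, g3, g4, g5⟩ := h1.join_inv
    have e1 := h2.leaf_inv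
    have e2 := g2.leaf_inv
    subst e1 e2
    obtain ⟨l, bt, f, hl⟩ := RT.lab h0 g1
    have hfA : ∀ i j, f i j ∈ A := fun i j => (hl.mem _).2 (.inr ⟨i, j, rfl⟩)
    simp only [Finset.disjoint_singleton_right, Finset.mem_union, Finset.mem_singleton, not_or] at h3 g3
    refine ⟨false, l, bt, hl.iso false ![x, y] ?_ ?_ ?_ ?_ ?_ ?_⟩
    · intro j; fin_cases j
      · exact g3
      · exact h3.1
    · simpa using fun e => h3.2 e.symm
    · intro v
      have := Finset.mem_univ v
      rw [hU] at this
      simp only [Finset.mem_union, Finset.mem_singleton] at this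
      rcases this with (h | h) | h
      · exact .inl h
      · exact .inr ⟨0, h.symm⟩
      · exact .inr ⟨1, h.symm⟩
    · intro j; fin_cases j <;> simp [g4, h4]
    · have : ¬ G.Adj x y := fun e => g4.ne (h5 x (by simp) y (by simp) e).1.symm
      simpa using this
    · intro i j k e
      fin_cases k
      · exact hl.ne _ _ (g5 _ (hfA i j) x (by simp) e).1
      · exact hl.ne _ _ (h5 _ (Finset.mem_union_left _ (hfA i j)) y (by simp) e).1
  · have h := h.re hr
    obtain ⟨A, B, x, hU, h1, h2, h3, h4, h5⟩ := h.join_inv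
    obtain ⟨B1, B2, y, rfl, g1, g2, g3, g4, g5⟩ := h2.join_inv
    have e1 := g1.leaf_inv
    have e2 := g2.leaf_inv
    subst e1 e2
    obtain ⟨l, bt, f, hl⟩ := RT.lab h0 h1
    have hfA : ∀ i j, f i j ∈ A := fun i j => (hl.mem _).2 (.inr ⟨i, j, rfl⟩)
    rw [Finset.disjoint_union_right] at h3
    simp only [Finset.disjoint_singleton_right] at h3
    refine ⟨true, l, bt, hl.iso true ![x, y] ?_ ?_ ?_ ?_ ?_ ?_⟩
    · intro j; fin_cases j
      · exact h3.1
      · exact h3.2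
    · exact g4.ne
    · intro v
      have := Finset.mem_univ v
      rw [hU] at this
      simp only [Finset.mem_union, Finset.mem_singleton] at this
      rcases this with h | h | h
      · exact .inl h
      · exact .inr ⟨0, h.symm⟩
      · exact .inr ⟨1, h.symm⟩
    · have : ¬ G.Adj r y := fun e => g4.ne (h5 r h1.root_mem y (by simp) e).2.symm
      intro j; fin_cases j <;> simp [h4, this]
    · simpa using g4
    · intro i j k e
      fin_cases k
      · exact hl.ne _ _ (h5 _ (hfA i j) x (by simp) e).1
      · exact hl.ne _ _ (h5 _ (hfA i j) y (by simp) e).1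

theorem tree_not_in_H_bound {V : Type*} [Fintype V] (T : SimpleGraph V) (n : ℕ)
    (hn : Fintype.card V = n) (h3 : 3 ≤ n) (hmod : n % 3 = 0)
    (htree : T.IsTree)
    (hnotH : ∀ (pa : Bool) (l : ℕ) (bt : Fin l → Bool), IsEmpty (T ≃g HModel pa l bt)) :
    numMaxDissoc T ≤ 3 ^ (n / 3 - 1) + 1 := by
  obtain ⟨r, t, ht⟩ := RT.exists_univ htree
  have hsz : t.size = n := by rw [← ht.card_eq, Finset.card_univ, hn]
  rw [ht.numMaxDissoc_eq]
  rcases RTree.main_bound t (n / 3 - 1) (by omega) with h | ⟨t', hU, hF⟩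
  · exact h
  · exfalso
    obtain ⟨r', ht'⟩ := ht.u hU
    obtain ⟨pa, l, bt, ⟨e⟩⟩ := ht'.full_iso hF (by rw [← hU.size_eq, hsz, hmod])
    exact (hnotH pa l bt).false e
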